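/- arXiv:2309.10415 — 7 statements merged into one kernel-verified Lean document; each statement's English description precedes it below -/
import Mathlib

section
/- Let H ∈ (0, 1/2) and C₀ > 0. There exists a constant C > 0 depending only on H and C₀ with the following property: for every T ≥ 1 and all measurable symmetric functions ρ₁, ρ₂ : ℝ × ℝ → ℝ (ρᵢ(x,y) = ρᵢ(y,x)) such that for all 0 ≤ s < t ≤ T one has |ρ₂(t,s)| ≤ C₀ · min(1, (t−s)^(2H−2)) and |ρ₁(t,s) − ρ₂(t,s)| ≤ C₀ · min(1, s^(2H−2), (t−s)^(H−1)), it holds that |∫∫_{0<s<t<T} (ρ₁(t,s)² − ρ₂(t,s)²) dt ds| ≤ C · T^H. -/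
open MeasureTheory Real Set Filter

/-!
Writing `u = t - s` and `ρ₁² - ρ₂² = (ρ₁ - ρ₂) (ρ₁ + ρ₂)`, one spends the decay in `s` of `ρ₁ - ρ₂`
on the first factor and only the decay in `u` on the second, since `ρ₂` and `ρ₁ - ρ₂` are both
`O(u ^ (H - 1))`. The integrand is thus dominated by a constant times
`min 1 (s ^ (2 * H - 2)) * u ^ (H - 1)`. The shear `(s, t) ↦ (s, u)` preserves Lebesgue measure and
maps the simplex into `(0, ∞) × (0, T]`, where the two variables separate: the integral in `s`
converges because `2 * H - 2 < -1`, and the integral in `u` is `T ^ H / H`.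
-/

section Shear

variable {G : Type*} [AddGroup G] [MeasurableSpace G] [MeasurableAdd₂ G] [MeasurableNeg G]
  {μ ν : Measure G} [SFinite μ] [SFinite ν] [ν.IsAddRightInvariant]
  {A B : Set G}

lemma integrableOn_mul_comp_sub {R : Type*} [NormedRing R] {f g : G → R}
    (hf : IntegrableOn f A μ) (hg : IntegrableOn g B ν) :
    IntegrableOn (fun p : G × G => f p.1 * g (p.2 - p.1)) {p | p.1 ∈ A ∧ p.2 - p.1 ∈ B}
      (μ.prod ν) := by
  have hprod : IntegrableOn (fun q : G × G => f q.1 * g q.2) (A ×ˢ B) (μ.prod ν) := by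
    rw [IntegrableOn, ← Measure.prod_restrict]
    exact hf.mul_prod hg
  exact ((measurePreserving_prod_sub μ ν).integrableOn_comp_preimage
    (MeasurableEquiv.shearSubRight G).measurableEmbedding).2 hprod

lemma setIntegral_mul_comp_sub {𝕜 : Type*} [RCLike 𝕜] (f g : G → 𝕜) (A B : Set G) :
    ∫ p in {p : G × G | p.1 ∈ A ∧ p.2 - p.1 ∈ B}, f p.1 * g (p.2 - p.1) ∂μ.prod ν =
      (∫ x in A, f x ∂μ) * ∫ y in B, g y ∂ν := by
  rw [← setIntegral_prod_mul]
  exact (measurePreserving_prod_sub μ ν).setIntegral_preimage_emb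
    (MeasurableEquiv.shearSubRight G).measurableEmbedding (fun q : G × G => f q.1 * g q.2) (A ×ˢ B)

variable {E : Type*} [NormedAddCommGroup E] {S : Set (G × G)} {F : G × G → E} {f g : G → ℝ}

lemma integrableOn_of_norm_le_mul_comp_sub (hf : IntegrableOn f A μ) (hg : IntegrableOn g B ν)
    (hS : MeasurableSet S) (hSAB : S ⊆ {p | p.1 ∈ A ∧ p.2 - p.1 ∈ B})
    (hF : AEStronglyMeasurable F ((μ.prod ν).restrict S))
    (hFle : ∀ p ∈ S, ‖F p‖ ≤ f p.1 * g (p.2 - p.1)) :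
    IntegrableOn F S (μ.prod ν) :=
  ((integrableOn_mul_comp_sub hf hg).mono_set hSAB).mono' hF (ae_restrict_of_forall_mem hS hFle)

lemma norm_setIntegral_le_mul_of_norm_le_mul_comp_sub [NormedSpace ℝ E]
    (hf : IntegrableOn f A μ) (hg : IntegrableOn g B ν)
    (hA : MeasurableSet A) (hB : MeasurableSet B)
    (hf₀ : ∀ x ∈ A, 0 ≤ f x) (hg₀ : ∀ y ∈ B, 0 ≤ g y)
    (hS : MeasurableSet S) (hSAB : S ⊆ {p | p.1 ∈ A ∧ p.2 - p.1 ∈ B})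
    (hFle : ∀ p ∈ S, ‖F p‖ ≤ f p.1 * g (p.2 - p.1)) :
    ‖∫ p in S, F p ∂μ.prod ν‖ ≤ (∫ x in A, f x ∂μ) * ∫ y in B, g y ∂ν := by
  have hint := integrableOn_mul_comp_sub hf hg
  have hAB : MeasurableSet {p : G × G | p.1 ∈ A ∧ p.2 - p.1 ∈ B} :=
    (MeasurableEquiv.shearSubRight G).measurable (hA.prod hB)
  calc ‖∫ p in S, F p ∂μ.prod ν‖
      ≤ ∫ p in S, f p.1 * g (p.2 - p.1) ∂μ.prod ν :=
        norm_integral_le_of_norm_le (hint.mono_set hSAB) (ae_restrict_of_forall_mem hS hFle)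
    _ ≤ ∫ p in {p : G × G | p.1 ∈ A ∧ p.2 - p.1 ∈ B}, f p.1 * g (p.2 - p.1) ∂μ.prod ν :=
        setIntegral_mono_set hint
          (ae_restrict_of_forall_mem hAB fun p hp => mul_nonneg (hf₀ _ hp.1) (hg₀ _ hp.2))
          (ae_of_all _ hSAB)
    _ = (∫ x in A, f x ∂μ) * ∫ y in B, g y ∂ν := setIntegral_mul_comp_sub f g A B

end Shear

section MinOneRpow

variable {a b x : ℝ}

lemma min_one_rpow_le_rpow (hx : 0 < x) (hab : a ≤ b) (hb : b ≤ 0) : min 1 (x ^ a) ≤ x ^ b := by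
  rcases le_total x 1 with hx₁ | hx₁
  · exact (min_le_left _ _).trans (one_le_rpow_of_pos_of_le_one_of_nonpos hx hx₁ hb)
  · exact (min_le_right _ _).trans (rpow_le_rpow_of_exponent_le hx₁ hab)

lemma eqOn_min_one_rpow_Ioc (ha : a ≤ 0) :
    EqOn (fun x : ℝ => min 1 (x ^ a)) (fun _ => 1) (Ioc 0 1) :=
  fun _ hx => min_eq_left (one_le_rpow_of_pos_of_le_one_of_nonpos hx.1 hx.2 ha)

lemma eqOn_min_one_rpow_Ioi (ha : a ≤ 0) :
    EqOn (fun x : ℝ => min 1 (x ^ a)) (fun x => x ^ a) (Ioi 1) :=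
  fun _ hx => min_eq_right (rpow_le_one_of_one_le_of_nonpos (le_of_lt hx) ha)

lemma integrableOn_Ioc_min_one_rpow (ha : a ≤ 0) :
    IntegrableOn (fun x : ℝ => min 1 (x ^ a)) (Ioc 0 1) :=
  (integrableOn_congr_fun (eqOn_min_one_rpow_Ioc ha) measurableSet_Ioc).2 (by simp)

lemma integrableOn_Ioi_one_min_one_rpow (ha : a < -1) :
    IntegrableOn (fun x : ℝ => min 1 (x ^ a)) (Ioi 1) :=
  (integrableOn_congr_fun (eqOn_min_one_rpow_Ioi (by linarith)) measurableSet_Ioi).2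
    (integrableOn_Ioi_rpow_of_lt ha one_pos)

lemma integrableOn_Ioi_min_one_rpow (ha : a < -1) :
    IntegrableOn (fun x : ℝ => min 1 (x ^ a)) (Ioi 0) := by
  rw [← Ioc_union_Ioi_eq_Ioi zero_le_one]
  exact (integrableOn_Ioc_min_one_rpow (by linarith)).union (integrableOn_Ioi_one_min_one_rpow ha)

lemma integral_Ioi_min_one_rpow (ha : a < -1) :
    ∫ x in Ioi (0 : ℝ), min 1 (x ^ a) = a / (a + 1) := by
  have ha₀ : a ≤ 0 := by linarith
  have ha₁ : a + 1 ≠ 0 := by linarith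
  have hIoc : ∫ x in Ioc (0 : ℝ) 1, min 1 (x ^ a) = 1 := by
    rw [setIntegral_congr_fun measurableSet_Ioc (eqOn_min_one_rpow_Ioc ha₀)]
    simp
  have hIoi : ∫ x in Ioi (1 : ℝ), min 1 (x ^ a) = -1 / (a + 1) := by
    rw [setIntegral_congr_fun measurableSet_Ioi (eqOn_min_one_rpow_Ioi ha₀),
      integral_Ioi_rpow_of_lt ha one_pos, one_rpow]
  rw [← Ioc_union_Ioi_eq_Ioi zero_le_one, setIntegral_union (Ioc_disjoint_Ioi le_rfl)
    measurableSet_Ioi (integrableOn_Ioc_min_one_rpow ha₀) (integrableOn_Ioi_one_min_one_rpow ha),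
    hIoc, hIoi]
  field_simp
  ring

end MinOneRpow

lemma integrableOn_Ioc_rpow_sub_one {b T : ℝ} (hb : 0 < b) (hT : 0 ≤ T) :
    IntegrableOn (fun u : ℝ => u ^ (b - 1)) (Ioc 0 T) :=
  (intervalIntegrable_iff_integrableOn_Ioc_of_le hT).1
    (intervalIntegral.intervalIntegrable_rpow' (by linarith))

lemma integral_Ioc_rpow_sub_one {b T : ℝ} (hb : 0 < b) (hT : 0 ≤ T) :
    ∫ u in Ioc 0 T, u ^ (b - 1) = T ^ b / b := by
  rw [← intervalIntegral.integral_of_le hT, integral_rpow (Or.inl (by linarith)), sub_add_cancel,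
    zero_rpow hb.ne', sub_zero]

lemma abs_sq_sub_sq_le {R : Type*} [CommRing R] [LinearOrder R] [IsStrictOrderedRing R]
    {x y a b : R} (hxya : |x - y| ≤ a) (hxyb : |x - y| ≤ b) (hy : |y| ≤ b) :
    |x ^ 2 - y ^ 2| ≤ 3 * (a * b) := by
  have hadd : |x + y| ≤ 3 * b :=
    calc |x + y| = |(x - y) + (y + y)| := by ring_nf
      _ ≤ |x - y| + (|y| + |y|) := (abs_add_le _ _).trans (by gcongr; exact abs_add_le _ _)
      _ ≤ 3 * b := by linarith
  calc |x ^ 2 - y ^ 2| = |x - y| * |x + y| := by rw [sq_sub_sq, abs_mul, mul_comm]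
    _ ≤ a * (3 * b) := mul_le_mul hxya hadd (abs_nonneg _) ((abs_nonneg _).trans hxya)
    _ = 3 * (a * b) := by ring

lemma abs_sq_sub_sq_le_min_one_rpow_mul_rpow {x y s u a b d c : ℝ} (hu : 0 < u) (hdb : d ≤ b)
    (hb : b ≤ 0) (hc : 0 ≤ c) (hy : |y| ≤ c * min 1 (u ^ d))
    (hxy : |x - y| ≤ c * min 1 (min (s ^ a) (u ^ b))) :
    |x ^ 2 - y ^ 2| ≤ min 1 (s ^ a) * (3 * c ^ 2 * u ^ b) := by
  rw [← min_assoc] at hxy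
  have hxys : |x - y| ≤ c * min 1 (s ^ a) :=
    hxy.trans (mul_le_mul_of_nonneg_left (min_le_left _ _) hc)
  have hxyu : |x - y| ≤ c * u ^ b := hxy.trans (mul_le_mul_of_nonneg_left (min_le_right _ _) hc)
  have hyu : |y| ≤ c * u ^ b :=
    hy.trans (mul_le_mul_of_nonneg_left (min_one_rpow_le_rpow hu hdb hb) hc)
  exact (abs_sq_sub_sq_le hxys hxyu hyu).trans_eq (by ring)

lemma measurableSet_setOf_pos_lt_lt (T : ℝ) :
    MeasurableSet {p : ℝ × ℝ | 0 < p.1 ∧ p.1 < p.2 ∧ p.2 < T} :=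
  (measurableSet_lt measurable_const measurable_fst).inter
    ((measurableSet_lt measurable_fst measurable_snd).inter
      (measurableSet_lt measurable_snd measurable_const))

theorem second_cumulant_difference_bound_general {α β γ c T : ℝ} (hα : α < -1) (hβ₀ : 0 < β)
    (hβ₁ : β ≤ 1) (hγ : γ ≤ β - 1) (hc : 0 ≤ c) (hT : 0 ≤ T) {ρ₁ ρ₂ : ℝ × ℝ → ℝ}
    (hρ₁ : Measurable ρ₁) (hρ₂ : Measurable ρ₂)
    (hcov : ∀ s t : ℝ, 0 < s → s < t → t < T → |ρ₂ (t, s)| ≤ c * min 1 ((t - s) ^ γ))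
    (hdiff : ∀ s t : ℝ, 0 < s → s < t → t < T →
      |ρ₁ (t, s) - ρ₂ (t, s)| ≤ c * min 1 (min (s ^ α) ((t - s) ^ (β - 1)))) :
    IntegrableOn (fun p : ℝ × ℝ => ρ₁ (p.2, p.1) ^ 2 - ρ₂ (p.2, p.1) ^ 2)
        {p : ℝ × ℝ | 0 < p.1 ∧ p.1 < p.2 ∧ p.2 < T} ∧
      |∫ p in {p : ℝ × ℝ | 0 < p.1 ∧ p.1 < p.2 ∧ p.2 < T},
          (ρ₁ (p.2, p.1) ^ 2 - ρ₂ (p.2, p.1) ^ 2)| ≤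
        3 * c ^ 2 * (α / (α + 1)) / β * T ^ β := by
  have hS := measurableSet_setOf_pos_lt_lt T
  have hsub : {p : ℝ × ℝ | 0 < p.1 ∧ p.1 < p.2 ∧ p.2 < T} ⊆
      {p | p.1 ∈ Ioi 0 ∧ p.2 - p.1 ∈ Ioc 0 T} :=
    fun p ⟨hs, hst, htT⟩ => ⟨hs, sub_pos.2 hst, by linarith⟩
  have hbound : ∀ p ∈ {p : ℝ × ℝ | 0 < p.1 ∧ p.1 < p.2 ∧ p.2 < T},
      ‖ρ₁ (p.2, p.1) ^ 2 - ρ₂ (p.2, p.1) ^ 2‖ ≤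
        min 1 (p.1 ^ α) * (3 * c ^ 2 * (p.2 - p.1) ^ (β - 1)) :=
    fun p ⟨hs, hst, htT⟩ => abs_sq_sub_sq_le_min_one_rpow_mul_rpow (sub_pos.2 hst) hγ (by linarith)
      hc (hcov _ _ hs hst htT) (hdiff _ _ hs hst htT)
  have hf := integrableOn_Ioi_min_one_rpow hα
  have hg := (integrableOn_Ioc_rpow_sub_one hβ₀ hT).const_mul (3 * c ^ 2)
  refine ⟨integrableOn_of_norm_le_mul_comp_sub hf hg hS hsub (by fun_prop) hbound, ?_⟩
  refine (norm_setIntegral_le_mul_of_norm_le_mul_comp_sub hf hg measurableSet_Ioi measurableSet_Ioc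
    (fun s hs => le_min zero_le_one (rpow_nonneg (le_of_lt hs) α))
    (fun u hu => mul_nonneg (by positivity) (rpow_nonneg hu.1.le _)) hS hsub hbound).trans_eq ?_
  rw [integral_Ioi_min_one_rpow hα, integral_const_mul, integral_Ioc_rpow_sub_one hβ₀ hT]
  ring

/-- Difference of second cumulants: under the covariance bounds, the integral of
`ρ₁² - ρ₂²` over the simplex `{0 < s < t < T}` is bounded by `C ⬝ T^H`. -/
theorem second_cumulant_difference_bound (H C₀ : ℝ) (hH : H ∈ Set.Ioo (0 : ℝ) (1/2))
    (hC₀ : 0 < C₀) :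
    ∃ C : ℝ, 0 < C ∧ ∀ T : ℝ, 1 ≤ T → ∀ ρ₁ ρ₂ : ℝ × ℝ → ℝ,
      Measurable ρ₁ → Measurable ρ₂ →
      (∀ x y : ℝ, ρ₁ (x, y) = ρ₁ (y, x)) →
      (∀ x y : ℝ, ρ₂ (x, y) = ρ₂ (y, x)) →
      (∀ s t : ℝ, 0 ≤ s → s < t → t ≤ T →
        |ρ₂ (t, s)| ≤ C₀ * min 1 ((t - s) ^ (2 * H - 2))) →
      (∀ s t : ℝ, 0 ≤ s → s < t → t ≤ T →
        |ρ₁ (t, s) - ρ₂ (t, s)| ≤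
          C₀ * min 1 (min (s ^ (2 * H - 2)) ((t - s) ^ (H - 1)))) →
      |∫ p in {p : ℝ × ℝ | 0 < p.1 ∧ p.1 < p.2 ∧ p.2 < T},
          (ρ₁ (p.2, p.1) ^ 2 - ρ₂ (p.2, p.1) ^ 2)| ≤ C * T ^ H := by
  obtain ⟨hH₀, hH₁⟩ := hH
  have hratio : 0 < (2 * H - 2) / (2 * H - 2 + 1) :=
    div_pos_of_neg_of_neg (by linarith) (by linarith)
  exact ⟨3 * C₀ ^ 2 * ((2 * H - 2) / (2 * H - 2 + 1)) / H, by positivity,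
    fun T hT ρ₁ ρ₂ hρ₁ hρ₂ _ _ hcov hdiff =>
      (second_cumulant_difference_bound_general (by linarith) hH₀ (by linarith) (by linarith)
        hC₀.le (by linarith) hρ₁ hρ₂ (fun s t hs hst htT => hcov s t hs.le hst htT.le)
        (fun s t hs hst htT => hdiff s t hs.le hst htT.le)).2⟩
end

section
/- Let H ∈ (0, 1/2) and C₀ > 0. There exists a constant C > 0 depending only on H and C₀ with the following property: for every T ≥ 1 and all measurable symmetric functions ρ₁, ρ₂ : ℝ × ℝ → ℝ (ρᵢ(x,y) = ρᵢ(y,x)) such that for all 0 ≤ s < t ≤ T one has |ρ₂(t,s)| ≤ C₀ · min(1, (t−s)^(2H−2)) and |ρ₁(t,s) − ρ₂(t,s)| ≤ C₀ · min(1, s^(2H−2), (t−s)^(H−1)), it holds that |∫∫∫∫_{0<s<t<u<v<T} (ρ₁(s,t)ρ₁(t,u)ρ₁(u,v)ρ₁(v,s) − ρ₂(s,t)ρ₂(t,u)ρ₂(u,v)ρ₂(v,s)) ds dt du dv| ≤ C · T^H. -/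
open MeasureTheory Real Set Filter

/-! Telescoping the difference of the two cyclic products produces terms which each contain a
factor `ρ₁ - ρ₂`. That factor is bounded by a decaying function of its *earlier* time, hence by the
same function of `s` or of any gap preceding that time. The long edge `(v, s)` is at least as long
as each of the gaps `t - s`, `u - t`, `v - u`, so its slowly decaying bound can be moved to
whichever gap is not yet paid for. In every term the four increments `s`, `t - s`, `u - t`, `v - u`
thus carry one factor each, three integrable ones and a single slowly decaying one, and the integral
factorises: only the last factor grows with `T`. -/

section CyclicProduct

/-- The product of a kernel along the four edges of the cycle `s → t → u → v → s`. -/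
def cyclicProduct (ρ : ℝ × ℝ → ℝ) (p : ℝ × ℝ × ℝ × ℝ) : ℝ :=
  ρ (p.1, p.2.1) * ρ (p.2.1, p.2.2.1) * ρ (p.2.2.1, p.2.2.2) * ρ (p.2.2.2, p.1)

lemma measurable_cyclicProduct {ρ : ℝ × ℝ → ℝ} (hρ : Measurable ρ) :
    Measurable (cyclicProduct ρ) := by
  unfold cyclicProduct
  fun_prop

/-- The simplex of ordered quadruples of times in `(0, T)`. -/
def orderedTimes (T : ℝ) : Set (ℝ × ℝ × ℝ × ℝ) :=
  {p | 0 < p.1 ∧ p.1 < p.2.1 ∧ p.2.1 < p.2.2.1 ∧ p.2.2.1 < p.2.2.2 ∧ p.2.2.2 < T}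

lemma measurableSet_orderedTimes (T : ℝ) : MeasurableSet (orderedTimes T) := by
  unfold orderedTimes
  measurability

end CyclicProduct

section Telescoping

variable {R : Type*} [CommRing R] [LinearOrder R] [IsStrictOrderedRing R]

lemma abs_mul_sub_mul_le {a c r e p P q Q : R} (hd : |a - r| ≤ p) (hc : |c| ≤ P) (hr : |r| ≤ q)
    (hce : |c - e| ≤ Q) : |a * c - r * e| ≤ p * P + q * Q := by
  have hp := (abs_nonneg _).trans hd
  have hq := (abs_nonneg _).trans hr
  calc |a * c - r * e| = |(a - r) * c + r * (c - e)| := by ring_nf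
    _ ≤ |a - r| * |c| + |r| * |c - e| := by
      simpa only [abs_mul] using abs_add_le ((a - r) * c) (r * (c - e))
    _ ≤ p * P + q * Q := by gcongr

lemma abs_mul_le_of_abs_sub_le {a c r p P q Q : R} (hd : |a - r| ≤ p) (hP : |c| ≤ P)
    (hr : |r| ≤ q) (hQ : |c| ≤ Q) : |a * c| ≤ p * P + q * Q := by
  simpa using abs_mul_sub_mul_le hd hP hr (e := 0) (by simpa using hQ)

lemma abs_mul_four_sub_mul_four_le {w x y z gx gy gz a₁ a₂ a₃ a₄ r₁ r₂ r₃ r₄ : R}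
    (hr₁ : |r₁| ≤ x) (hr₂ : |r₂| ≤ y) (hr₃ : |r₃| ≤ z) (hr₃' : |r₃| ≤ gz)
    (hd₁ : |a₁ - r₁| ≤ w) (hd₂ : |a₂ - r₂| ≤ min w x) (hd₃ : |a₃ - r₃| ≤ min w (min x y))
    (hd₄ : |a₄ - r₄| ≤ w) (ha₄ : |a₄| ≤ 2 * min gx (min gy gz)) :
    |a₁ * a₂ * a₃ * a₄ - r₁ * r₂ * r₃ * r₄| ≤
      9 * (w * (x * (y * gz))) + 4 * (w * (x * (gy * z))) + 2 * (w * (gx * (y * z))) := by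
  obtain ⟨hd₂w, hd₂x⟩ := le_min_iff.1 hd₂
  obtain ⟨hd₃w, hd₃xy⟩ := le_min_iff.1 hd₃
  obtain ⟨hd₃x, hd₃y⟩ := le_min_iff.1 hd₃xy
  rw [mul_min_of_nonneg _ _ zero_le_two, mul_min_of_nonneg _ _ zero_le_two, le_min_iff,
    le_min_iff] at ha₄
  obtain ⟨ha₄x, ha₄y, ha₄z⟩ := ha₄
  have tail₃_x := abs_mul_le_of_abs_sub_le hd₃x ha₄z hr₃ ha₄x
  have tail₃_y := abs_mul_le_of_abs_sub_le hd₃y ha₄z hr₃ ha₄y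
  have tail₂ := abs_mul_le_of_abs_sub_le hd₂x tail₃_y hr₂ tail₃_x
  have diff₃ := abs_mul_sub_mul_le hd₃w ha₄z hr₃' hd₄
  have diff₂ := abs_mul_sub_mul_le hd₂w tail₃_y hr₂ diff₃
  have diff₁ := abs_mul_sub_mul_le hd₁ tail₂ hr₁ diff₂
  calc |a₁ * a₂ * a₃ * a₄ - r₁ * r₂ * r₃ * r₄|
      = |a₁ * (a₂ * (a₃ * a₄)) - r₁ * (r₂ * (r₃ * r₄))| := by simp only [mul_assoc]
    _ ≤ _ := diff₁
    _ = _ := by ring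

end Telescoping

section Increments

/-- The change of variables from ordered times `(s, t, u, v)` to `(s, t - s, u - t, v - u)`. -/
def increments (p : ℝ × ℝ × ℝ × ℝ) : ℝ × ℝ × ℝ × ℝ :=
  (p.1, p.2.1 - p.1, p.2.2.1 - p.2.1, p.2.2.2 - p.2.2.1)

lemma measurePreserving_increments : MeasurePreserving increments := by
  have last (u : ℝ) : MeasurePreserving fun v : ℝ => v - u := measurePreserving_sub_right volume u
  have lastTwo (t : ℝ) : MeasurePreserving fun q : ℝ × ℝ => (q.1 - t, q.2 - q.1) :=
    (last t).skew_product (g := fun u v => v - u) (by fun_prop)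
      (.of_forall fun u => (last u).map_eq)
  have lastThree (s : ℝ) : MeasurePreserving fun q : ℝ × ℝ × ℝ =>
      (q.1 - s, q.2.1 - q.1, q.2.2 - q.2.1) :=
    (last s).skew_product (g := fun t (q : ℝ × ℝ) => (q.1 - t, q.2 - q.1)) (by fun_prop)
      (.of_forall fun t => (lastTwo t).map_eq)
  exact (MeasurePreserving.id volume).skew_product
    (g := fun s (q : ℝ × ℝ × ℝ) => (q.1 - s, q.2.1 - q.1, q.2.2 - q.2.1)) (by fun_prop)
    (.of_forall fun s => (lastThree s).map_eq)

/-- The cube `(0, T)⁴`, which contains the increments of all ordered times in `(0, T)`. -/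
def timeCube (T : ℝ) : Set (ℝ × ℝ × ℝ × ℝ) := Ioo 0 T ×ˢ Ioo 0 T ×ˢ Ioo 0 T ×ˢ Ioo 0 T

lemma measurableSet_timeCube (T : ℝ) : MeasurableSet (timeCube T) :=
  measurableSet_Ioo.prod (measurableSet_Ioo.prod (measurableSet_Ioo.prod measurableSet_Ioo))

lemma orderedTimes_subset_preimage_timeCube (T : ℝ) :
    orderedTimes T ⊆ increments ⁻¹' timeCube T := by
  rintro ⟨s, t, u, v⟩ ⟨hs, hst, htu, huv, hvT⟩
  simp only at hs hst htu huv hvT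
  simp only [increments, timeCube, mem_preimage, mem_prod, mem_Ioo]
  refine ⟨⟨?_, ?_⟩, ⟨?_, ?_⟩, ⟨?_, ?_⟩, ?_, ?_⟩ <;> linarith

/-- The majorant of the difference of cyclic products, as a function of the increments; the
coefficients count the terms of the telescoped difference. -/
def incrementMajorant (b g : ℝ → ℝ) (q : ℝ × ℝ × ℝ × ℝ) : ℝ :=
  9 * (b q.1 * (b q.2.1 * (b q.2.2.1 * g q.2.2.2))) +
    4 * (b q.1 * (b q.2.1 * (g q.2.2.1 * b q.2.2.2))) +
    2 * (b q.1 * (g q.2.1 * (b q.2.2.1 * b q.2.2.2)))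

lemma incrementMajorant_nonneg {b g : ℝ → ℝ} {T : ℝ} (hb : ∀ x ∈ Ioo 0 T, 0 ≤ b x)
    (hg : ∀ x ∈ Ioo 0 T, 0 ≤ g x) {q : ℝ × ℝ × ℝ × ℝ} (hq : q ∈ timeCube T) :
    0 ≤ incrementMajorant b g q := by
  obtain ⟨h₁, h₂, h₃, h₄⟩ := hq
  have := hb _ h₁
  have := hb _ h₂
  have := hb _ h₃
  have := hb _ h₄
  have := hg _ h₂
  have := hg _ h₃
  have := hg _ h₄
  unfold incrementMajorant
  positivity

lemma integrable_incrementMajorant {b g : ℝ → ℝ} {μ : Measure ℝ} [SFinite μ]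
    (hb : Integrable b μ) (hg : Integrable g μ) :
    Integrable (incrementMajorant b g) (μ.prod (μ.prod (μ.prod μ))) :=
  (((hb.mul_prod (hb.mul_prod (hb.mul_prod hg))).const_mul 9).add
    ((hb.mul_prod (hb.mul_prod (hg.mul_prod hb))).const_mul 4)).add
    ((hb.mul_prod (hg.mul_prod (hb.mul_prod hb))).const_mul 2)

lemma integral_prod_mul_four {α β γ δ : Type*} [MeasurableSpace α] [MeasurableSpace β]
    [MeasurableSpace γ] [MeasurableSpace δ] {κ : Measure α} {μ : Measure β} {ν : Measure γ}
    {ξ : Measure δ} [SFinite κ] [SFinite μ] [SFinite ν] [SFinite ξ]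
    (f₁ : α → ℝ) (f₂ : β → ℝ) (f₃ : γ → ℝ) (f₄ : δ → ℝ) :
    ∫ q, f₁ q.1 * (f₂ q.2.1 * (f₃ q.2.2.1 * f₄ q.2.2.2)) ∂κ.prod (μ.prod (ν.prod ξ)) =
      (∫ x, f₁ x ∂κ) * ((∫ x, f₂ x ∂μ) * ((∫ x, f₃ x ∂ν) * ∫ x, f₄ x ∂ξ)) := by
  rw [← integral_prod_mul f₃, ← integral_prod_mul f₂, ← integral_prod_mul f₁]

lemma integral_incrementMajorant {b g : ℝ → ℝ} {μ : Measure ℝ} [SFinite μ]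
    (hb : Integrable b μ) (hg : Integrable g μ) :
    ∫ q, incrementMajorant b g q ∂μ.prod (μ.prod (μ.prod μ)) =
      15 * (∫ x, b x ∂μ) ^ 3 * ∫ x, g x ∂μ := by
  have int₄ := (hb.mul_prod (hb.mul_prod (hb.mul_prod hg))).const_mul 9
  have int₃ := (hb.mul_prod (hb.mul_prod (hg.mul_prod hb))).const_mul 4
  have int₂ := (hb.mul_prod (hg.mul_prod (hb.mul_prod hb))).const_mul 2
  simp only [incrementMajorant]
  rw [integral_add (by exact int₄.add int₃) int₂, integral_add int₄ int₃, integral_const_mul,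
    integral_const_mul, integral_const_mul, integral_prod_mul_four, integral_prod_mul_four,
    integral_prod_mul_four]
  ring

lemma restrict_timeCube (T : ℝ) :
    (volume : Measure (ℝ × ℝ × ℝ × ℝ)).restrict (timeCube T) =
      (volume.restrict (Ioo 0 T)).prod ((volume.restrict (Ioo 0 T)).prod
        ((volume.restrict (Ioo 0 T)).prod (volume.restrict (Ioo 0 T)))) := by
  simp only [timeCube, Measure.volume_eq_prod, Measure.prod_restrict]

lemma integrableOn_incrementMajorant_comp_increments {b g : ℝ → ℝ} {T : ℝ}
    (hb : IntegrableOn b (Ioo 0 T)) (hg : IntegrableOn g (Ioo 0 T)) :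
    IntegrableOn (incrementMajorant b g ∘ increments) (increments ⁻¹' timeCube T) := by
  refine (measurePreserving_increments.restrict_preimage
    (measurableSet_timeCube T)).integrable_comp_of_integrable ?_
  rw [restrict_timeCube]
  exact integrable_incrementMajorant hb hg

lemma setIntegral_incrementMajorant_comp_increments {b g : ℝ → ℝ} {T : ℝ}
    (hb : IntegrableOn b (Ioo 0 T)) (hg : IntegrableOn g (Ioo 0 T)) :
    ∫ p in increments ⁻¹' timeCube T, incrementMajorant b g (increments p) =
      15 * (∫ x in Ioo 0 T, b x) ^ 3 * ∫ x in Ioo 0 T, g x := by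
  have hφ := measurePreserving_increments.restrict_preimage (measurableSet_timeCube T)
  rw [restrict_timeCube] at hφ
  have hint := integrable_incrementMajorant hb hg
  rw [← integral_incrementMajorant hb hg, ← hφ.map_eq, integral_map hφ.aemeasurable]
  rw [hφ.map_eq]
  exact hint.aestronglyMeasurable

end Increments

section Perturbation

/-- The symmetric kernel `ρ₁` is a perturbation of the symmetric kernel `ρ₂` controlled on `(0, T)`
by antitone majorants `b ≤ g`: the kernel `ρ₂` decays like `b` in the time gap, and `ρ₁ - ρ₂` decays
like `b` in the earlier time and like `g` in the time gap. Bounds are imposed with the later time as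
first argument. -/
structure IsMajorizedPerturbation (ρ₁ ρ₂ : ℝ × ℝ → ℝ) (b g : ℝ → ℝ) (T : ℝ) : Prop where
  symm₁ : ∀ x y, ρ₁ (x, y) = ρ₁ (y, x)
  symm₂ : ∀ x y, ρ₂ (x, y) = ρ₂ (y, x)
  antitoneOn_fast : AntitoneOn b (Ioo 0 T)
  antitoneOn_slow : AntitoneOn g (Ioo 0 T)
  fast_le_slow : ∀ x ∈ Ioo 0 T, b x ≤ g x
  abs_le_fast_gap : ∀ ⦃s t⦄, 0 < s → s < t → t < T → |ρ₂ (t, s)| ≤ b (t - s)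
  abs_sub_le_fast : ∀ ⦃s t⦄, 0 < s → s < t → t < T → |ρ₁ (t, s) - ρ₂ (t, s)| ≤ b s
  abs_sub_le_slow_gap : ∀ ⦃s t⦄, 0 < s → s < t → t < T → |ρ₁ (t, s) - ρ₂ (t, s)| ≤ g (t - s)

namespace IsMajorizedPerturbation

variable {ρ₁ ρ₂ : ℝ × ℝ → ℝ} {b g : ℝ → ℝ} {T : ℝ}

lemma fast_nonneg (h : IsMajorizedPerturbation ρ₁ ρ₂ b g T) {x : ℝ} (hx : x ∈ Ioo 0 T) :
    0 ≤ b x := by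
  obtain ⟨y, hxy, hyT⟩ := exists_between hx.2
  exact (abs_nonneg _).trans (h.abs_sub_le_fast hx.1 hxy hyT)

lemma abs_sub_le_fast_of_le (h : IsMajorizedPerturbation ρ₁ ρ₂ b g T) {x s t : ℝ} (hx : 0 < x)
    (hxs : x ≤ s) (hst : s < t) (htT : t < T) : |ρ₁ (t, s) - ρ₂ (t, s)| ≤ b x :=
  (h.abs_sub_le_fast (hx.trans_le hxs) hst htT).trans
    (h.antitoneOn_fast ⟨hx, by linarith⟩ ⟨by linarith, by linarith⟩ hxs)

lemma abs_le_slow_of_le_gap (h : IsMajorizedPerturbation ρ₁ ρ₂ b g T) {x s t : ℝ} (hs : 0 < s)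
    (hx : 0 < x) (hxst : x ≤ t - s) (htT : t < T) : |ρ₁ (t, s)| ≤ 2 * g x := by
  have hst : s < t := by linarith
  have hgap : t - s ∈ Ioo 0 T := ⟨by linarith, by linarith⟩
  have hρ₂ := (h.abs_le_fast_gap hs hst htT).trans (h.fast_le_slow _ hgap)
  have hδ := h.abs_sub_le_slow_gap hs hst htT
  have hg := h.antitoneOn_slow ⟨hx, by linarith⟩ hgap hxst
  have htri := abs_add_le (ρ₂ (t, s)) (ρ₁ (t, s) - ρ₂ (t, s))
  rw [add_sub_cancel] at htri
  linarith

lemma abs_cyclicProduct_sub_le (h : IsMajorizedPerturbation ρ₁ ρ₂ b g T) {p : ℝ × ℝ × ℝ × ℝ}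
    (hp : p ∈ orderedTimes T) :
    |cyclicProduct ρ₁ p - cyclicProduct ρ₂ p| ≤ incrementMajorant b g (increments p) := by
  obtain ⟨s, t, u, v⟩ := p
  obtain ⟨hs, hst, htu, huv, hvT⟩ := hp
  simp only at hs hst htu huv hvT
  simp only [cyclicProduct, incrementMajorant, increments]
  rw [h.symm₁ s t, h.symm₁ t u, h.symm₁ u v, h.symm₂ s t, h.symm₂ t u, h.symm₂ u v]
  have ht : 0 < t := hs.trans hst
  have hu : 0 < u := ht.trans htu
  have htT : t < T := by linarith
  have huT : u < T := by linarith
  have hsv : s < v := by linarith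
  have hx : 0 < t - s := sub_pos.2 hst
  have hy : 0 < u - t := sub_pos.2 htu
  have hz : 0 < v - u := sub_pos.2 huv
  have hr₃ := h.abs_le_fast_gap hu huv hvT
  apply abs_mul_four_sub_mul_four_le (h.abs_le_fast_gap hs hst htT)
    (h.abs_le_fast_gap ht htu huT) hr₃ (hr₃.trans (h.fast_le_slow _ ⟨hz, by linarith⟩))
    (h.abs_sub_le_fast hs hst htT) _ _ (h.abs_sub_le_fast hs hsv hvT)
  · have long_edge {x : ℝ} (hx : 0 < x) (hxsv : x ≤ v - s) : |ρ₁ (v, s)| ≤ 2 * g x :=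
      h.abs_le_slow_of_le_gap hs hx hxsv hvT
    rw [mul_min_of_nonneg _ _ zero_le_two, mul_min_of_nonneg _ _ zero_le_two]
    exact le_min (long_edge hx (by linarith))
      (le_min (long_edge hy (by linarith)) (long_edge hz (by linarith)))
  · exact le_min (h.abs_sub_le_fast_of_le hs hst.le htu huT)
      (h.abs_sub_le_fast_of_le hx (by linarith) htu huT)
  · exact le_min (h.abs_sub_le_fast_of_le hs (by linarith) huv hvT)
      (le_min (h.abs_sub_le_fast_of_le hx (by linarith) huv hvT)
        (h.abs_sub_le_fast_of_le hy (by linarith) huv hvT))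

lemma integrableOn_cyclicProduct_sub (h : IsMajorizedPerturbation ρ₁ ρ₂ b g T)
    (hρ₁ : Measurable ρ₁) (hρ₂ : Measurable ρ₂)
    (hb : IntegrableOn b (Ioo 0 T)) (hg : IntegrableOn g (Ioo 0 T)) :
    IntegrableOn (fun p => cyclicProduct ρ₁ p - cyclicProduct ρ₂ p) (orderedTimes T) :=
  ((integrableOn_incrementMajorant_comp_increments hb hg).mono_set
      (orderedTimes_subset_preimage_timeCube T)).mono'
    ((measurable_cyclicProduct hρ₁).sub (measurable_cyclicProduct hρ₂)).aestronglyMeasurable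
    (ae_restrict_of_forall_mem (measurableSet_orderedTimes T)
      fun _ => h.abs_cyclicProduct_sub_le)

theorem abs_setIntegral_cyclicProduct_sub_le (h : IsMajorizedPerturbation ρ₁ ρ₂ b g T)
    (hb : IntegrableOn b (Ioo 0 T)) (hg : IntegrableOn g (Ioo 0 T)) :
    |∫ p in orderedTimes T, (cyclicProduct ρ₁ p - cyclicProduct ρ₂ p)| ≤
      15 * (∫ x in Ioo 0 T, b x) ^ 3 * ∫ x in Ioo 0 T, g x := by
  have hint := integrableOn_incrementMajorant_comp_increments hb hg
  have hsub := orderedTimes_subset_preimage_timeCube T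
  have hfast : ∀ x ∈ Ioo 0 T, 0 ≤ b x := fun _ => h.fast_nonneg
  have hslow : ∀ x ∈ Ioo 0 T, 0 ≤ g x := fun x hx => (hfast x hx).trans (h.fast_le_slow x hx)
  calc |∫ p in orderedTimes T, (cyclicProduct ρ₁ p - cyclicProduct ρ₂ p)|
      ≤ ∫ p in orderedTimes T, incrementMajorant b g (increments p) := by
        rw [← norm_eq_abs]
        exact norm_integral_le_of_norm_le (hint.mono_set hsub) (ae_restrict_of_forall_mem
          (measurableSet_orderedTimes T) fun _ => h.abs_cyclicProduct_sub_le)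
    _ ≤ ∫ p in increments ⁻¹' timeCube T, incrementMajorant b g (increments p) :=
        setIntegral_mono_set hint
          (ae_restrict_of_forall_mem
            (measurePreserving_increments.measurable (measurableSet_timeCube T))
            fun _ => incrementMajorant_nonneg hfast hslow)
          hsub.eventuallyLE
    _ = 15 * (∫ x in Ioo 0 T, b x) ^ 3 * ∫ x in Ioo 0 T, g x :=
        setIntegral_incrementMajorant_comp_increments hb hg

end IsMajorizedPerturbation

end Perturbation

section TruncatedPower

lemma antitoneOn_min_one_rpow {a : ℝ} (ha : a ≤ 0) :
    AntitoneOn (fun x : ℝ => min 1 (x ^ a)) (Ioi 0) :=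
  fun _ hx _ _ hxy => min_le_min_left 1 (rpow_le_rpow_of_nonpos hx hxy ha)

lemma min_one_rpow_nonneg {x : ℝ} (a : ℝ) (hx : 0 ≤ x) : 0 ≤ min 1 (x ^ a) :=
  le_min zero_le_one (rpow_nonneg hx a)

lemma min_one_rpow_le_min_one_rpow {a c x : ℝ} (hx : 0 < x) (hac : a ≤ c) (hc : c ≤ 0) :
    min 1 (x ^ a) ≤ min 1 (x ^ c) := by
  refine le_min (min_le_left _ _) ?_
  rcases le_total x 1 with h | h
  · exact (min_le_left _ _).trans (one_le_rpow_of_pos_of_le_one_of_nonpos hx h hc)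
  · exact (min_le_right _ _).trans (rpow_le_rpow_of_exponent_le h hac)

lemma integrableOn_Ioo_min_one_rpow (a T : ℝ) :
    IntegrableOn (fun x : ℝ => min 1 (x ^ a)) (Ioo 0 T) := by
  refine Measure.integrableOn_of_bounded (M := 1) measure_Ioo_lt_top.ne
    (by fun_prop : Measurable fun x : ℝ => min 1 (x ^ a)).aestronglyMeasurable
    (ae_restrict_of_forall_mem measurableSet_Ioo fun x hx => ?_)
  rw [norm_of_nonneg (min_one_rpow_nonneg a hx.1.le)]
  exact min_le_left _ _

lemma integral_Ioo_min_one_rpow_le_of_lt_neg_one {a : ℝ} (ha : a < -1) (T : ℝ) :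
    ∫ x in Ioo 0 T, min 1 (x ^ a) ≤ a / (a + 1) := by
  have hne : a + 1 ≠ 0 := by linarith
  have on_Ioc : EqOn (fun x : ℝ => min 1 (x ^ a)) (fun _ => 1) (Ioc 0 1) := fun x hx =>
    min_eq_left (one_le_rpow_of_pos_of_le_one_of_nonpos hx.1 hx.2 (by linarith))
  have on_Ioi : EqOn (fun x : ℝ => min 1 (x ^ a)) (fun x => x ^ a) (Ioi 1) := fun x hx =>
    min_eq_right (rpow_le_one_of_one_le_of_nonpos (le_of_lt hx) (by linarith))
  have int_Ioc : IntegrableOn (fun x : ℝ => min 1 (x ^ a)) (Ioc 0 1) :=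
    (integrableOn_Ioc_iff_integrableOn_Ioo (by simp)).2 (integrableOn_Ioo_min_one_rpow a 1)
  have int_Ioi : IntegrableOn (fun x : ℝ => min 1 (x ^ a)) (Ioi 1) :=
    (integrableOn_Ioi_rpow_of_lt ha zero_lt_one).congr_fun on_Ioi.symm measurableSet_Ioi
  have int_all : IntegrableOn (fun x : ℝ => min 1 (x ^ a)) (Ioi 0) := by
    rw [← Ioc_union_Ioi_eq_Ioi zero_le_one]
    exact int_Ioc.union int_Ioi
  calc ∫ x in Ioo 0 T, min 1 (x ^ a) ≤ ∫ x in Ioi 0, min 1 (x ^ a) :=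
        setIntegral_mono_set int_all
          (ae_restrict_of_forall_mem measurableSet_Ioi fun x hx =>
            min_one_rpow_nonneg a (le_of_lt hx))
          Ioo_subset_Ioi_self.eventuallyLE
    _ = (∫ x in Ioc (0 : ℝ) 1, 1) + ∫ x in Ioi (1 : ℝ), x ^ a := by
        rw [← Ioc_union_Ioi_eq_Ioi zero_le_one, setIntegral_union Ioc_disjoint_Ioi_same
          measurableSet_Ioi int_Ioc int_Ioi, setIntegral_congr_fun measurableSet_Ioc on_Ioc,
          setIntegral_congr_fun measurableSet_Ioi on_Ioi]
    _ = a / (a + 1) := by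
        rw [integral_Ioi_rpow_of_lt ha zero_lt_one, one_rpow]
        simp only [integral_const, measureReal_restrict_apply_univ, Real.volume_real_Ioc, sub_zero,
          max_eq_left zero_le_one, smul_eq_mul, mul_one]
        field_simp
        ring

lemma integral_Ioo_min_one_rpow_le_rpow {a T : ℝ} (ha : -1 < a) (hT : 0 ≤ T) :
    ∫ x in Ioo 0 T, min 1 (x ^ a) ≤ T ^ (a + 1) / (a + 1) := by
  have hint : IntegrableOn (fun x : ℝ => x ^ a) (Ioo 0 T) :=
    (intervalIntegrable_iff_integrableOn_Ioo_of_le hT).1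
      (intervalIntegral.intervalIntegrable_rpow' ha)
  calc ∫ x in Ioo 0 T, min 1 (x ^ a) ≤ ∫ x in Ioo 0 T, x ^ a :=
        setIntegral_mono (integrableOn_Ioo_min_one_rpow a T) hint fun _ => min_le_right _ _
    _ = T ^ (a + 1) / (a + 1) := by
        rw [← integral_Ioc_eq_integral_Ioo, ← intervalIntegral.integral_of_le hT,
          integral_rpow (.inl ha), zero_rpow (by linarith), sub_zero]

end TruncatedPower

lemma isMajorizedPerturbation_min_one_rpow {α β C₀ T : ℝ} (hαβ : α ≤ β) (hβ : β ≤ 0)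
    (hC₀ : 0 ≤ C₀) {ρ₁ ρ₂ : ℝ × ℝ → ℝ}
    (symm₁ : ∀ x y, ρ₁ (x, y) = ρ₁ (y, x)) (symm₂ : ∀ x y, ρ₂ (x, y) = ρ₂ (y, x))
    (hρ₂ : ∀ s t, 0 < s → s < t → t < T → |ρ₂ (t, s)| ≤ C₀ * min 1 ((t - s) ^ α))
    (hδ : ∀ s t, 0 < s → s < t → t < T →
      |ρ₁ (t, s) - ρ₂ (t, s)| ≤ C₀ * min 1 (min (s ^ α) ((t - s) ^ β))) :
    IsMajorizedPerturbation ρ₁ ρ₂ (fun x => C₀ * min 1 (x ^ α)) (fun x => C₀ * min 1 (x ^ β))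
      T where
  symm₁ := symm₁
  symm₂ := symm₂
  antitoneOn_fast _ hx _ hy hxy := mul_le_mul_of_nonneg_left
    (antitoneOn_min_one_rpow (hαβ.trans hβ) hx.1 hy.1 hxy) hC₀
  antitoneOn_slow _ hx _ hy hxy := mul_le_mul_of_nonneg_left
    (antitoneOn_min_one_rpow hβ hx.1 hy.1 hxy) hC₀
  fast_le_slow _ hx :=
    mul_le_mul_of_nonneg_left (min_one_rpow_le_min_one_rpow hx.1 hαβ hβ) hC₀
  abs_le_fast_gap := hρ₂
  abs_sub_le_fast s t hs hst htT := (hδ s t hs hst htT).trans <|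
    mul_le_mul_of_nonneg_left (min_le_min_left 1 (min_le_left _ _)) hC₀
  abs_sub_le_slow_gap s t hs hst htT := (hδ s t hs hst htT).trans <|
    mul_le_mul_of_nonneg_left (min_le_min_left 1 (min_le_right _ _)) hC₀

theorem fourth_cumulant_difference_bound_general {α β C₀ T : ℝ} (hα : α < -1) (hβ : β ∈ Ioc (-1) 0)
    (hC₀ : 0 ≤ C₀) (hT : 0 ≤ T) {ρ₁ ρ₂ : ℝ × ℝ → ℝ} (hρ₁m : Measurable ρ₁) (hρ₂m : Measurable ρ₂)
    (symm₁ : ∀ x y, ρ₁ (x, y) = ρ₁ (y, x)) (symm₂ : ∀ x y, ρ₂ (x, y) = ρ₂ (y, x))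
    (hρ₂ : ∀ s t, 0 < s → s < t → t < T → |ρ₂ (t, s)| ≤ C₀ * min 1 ((t - s) ^ α))
    (hδ : ∀ s t, 0 < s → s < t → t < T →
      |ρ₁ (t, s) - ρ₂ (t, s)| ≤ C₀ * min 1 (min (s ^ α) ((t - s) ^ β))) :
    IntegrableOn (fun p => cyclicProduct ρ₁ p - cyclicProduct ρ₂ p) (orderedTimes T) ∧
      |∫ p in orderedTimes T, (cyclicProduct ρ₁ p - cyclicProduct ρ₂ p)| ≤
        15 * C₀ ^ 4 * (α / (α + 1)) ^ 3 / (β + 1) * T ^ (β + 1) := by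
  have h := isMajorizedPerturbation_min_one_rpow (by linarith [hβ.1]) hβ.2 hC₀ symm₁ symm₂ hρ₂ hδ
  have hb := (integrableOn_Ioo_min_one_rpow α T).const_mul C₀
  have hg := (integrableOn_Ioo_min_one_rpow β T).const_mul C₀
  have fast_nonneg : 0 ≤ ∫ x in Ioo 0 T, min 1 (x ^ α) :=
    setIntegral_nonneg measurableSet_Ioo fun x hx => min_one_rpow_nonneg α hx.1.le
  have slow_nonneg : 0 ≤ ∫ x in Ioo 0 T, min 1 (x ^ β) :=
    setIntegral_nonneg measurableSet_Ioo fun x hx => min_one_rpow_nonneg β hx.1.le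
  refine ⟨h.integrableOn_cyclicProduct_sub hρ₁m hρ₂m hb hg, ?_⟩
  calc |∫ p in orderedTimes T, (cyclicProduct ρ₁ p - cyclicProduct ρ₂ p)|
      ≤ 15 * (∫ x in Ioo 0 T, C₀ * min 1 (x ^ α)) ^ 3 * ∫ x in Ioo 0 T, C₀ * min 1 (x ^ β) :=
        h.abs_setIntegral_cyclicProduct_sub_le hb hg
    _ = 15 * C₀ ^ 4 * (∫ x in Ioo 0 T, min 1 (x ^ α)) ^ 3 * ∫ x in Ioo 0 T, min 1 (x ^ β) := by
        rw [integral_const_mul, integral_const_mul]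
        ring
    _ ≤ 15 * C₀ ^ 4 * (α / (α + 1)) ^ 3 * (T ^ (β + 1) / (β + 1)) := by
        gcongr
        · exact mul_nonneg (by positivity) (pow_nonneg
            (div_nonneg_of_nonpos (by linarith) (by linarith)) 3)
        · exact integral_Ioo_min_one_rpow_le_of_lt_neg_one hα T
        · exact integral_Ioo_min_one_rpow_le_rpow hβ.1 hT
    _ = 15 * C₀ ^ 4 * (α / (α + 1)) ^ 3 / (β + 1) * T ^ (β + 1) := by ring

/-- Difference of fourth cumulants: under the covariance bounds, the integral of
`ρ₁(s,t)ρ₁(t,u)ρ₁(u,v)ρ₁(v,s) - ρ₂(s,t)ρ₂(t,u)ρ₂(u,v)ρ₂(v,s)` over the simplex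
`{0 < s < t < u < v < T}` is bounded by `C ⬝ T^H`. -/
theorem fourth_cumulant_difference_bound (H C₀ : ℝ) (hH : H ∈ Set.Ioo (0 : ℝ) (1/2))
    (hC₀ : 0 < C₀) :
    ∃ C : ℝ, 0 < C ∧ ∀ T : ℝ, 1 ≤ T → ∀ ρ₁ ρ₂ : ℝ × ℝ → ℝ,
      Measurable ρ₁ → Measurable ρ₂ →
      (∀ x y : ℝ, ρ₁ (x, y) = ρ₁ (y, x)) →
      (∀ x y : ℝ, ρ₂ (x, y) = ρ₂ (y, x)) →
      (∀ s t : ℝ, 0 ≤ s → s < t → t ≤ T →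
        |ρ₂ (t, s)| ≤ C₀ * min 1 ((t - s) ^ (2 * H - 2))) →
      (∀ s t : ℝ, 0 ≤ s → s < t → t ≤ T →
        |ρ₁ (t, s) - ρ₂ (t, s)| ≤
          C₀ * min 1 (min (s ^ (2 * H - 2)) ((t - s) ^ (H - 1)))) →
      |∫ p in {p : ℝ × ℝ × ℝ × ℝ |
            0 < p.1 ∧ p.1 < p.2.1 ∧ p.2.1 < p.2.2.1 ∧ p.2.2.1 < p.2.2.2 ∧ p.2.2.2 < T},
          (ρ₁ (p.1, p.2.1) * ρ₁ (p.2.1, p.2.2.1) * ρ₁ (p.2.2.1, p.2.2.2) * ρ₁ (p.2.2.2, p.1)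
            - ρ₂ (p.1, p.2.1) * ρ₂ (p.2.1, p.2.2.1) * ρ₂ (p.2.2.1, p.2.2.2)
              * ρ₂ (p.2.2.2, p.1))| ≤ C * T ^ H := by
  obtain ⟨hH0, hH2⟩ := hH
  refine ⟨15 * C₀ ^ 4 * ((2 * H - 2) / (2 * H - 2 + 1)) ^ 3 / H, ?_, ?_⟩
  · have : 0 < (2 * H - 2) / (2 * H - 2 + 1) := div_pos_of_neg_of_neg (by linarith) (by linarith)
    positivity
  · intro T hT ρ₁ ρ₂ hρ₁ hρ₂ symm₁ symm₂ hbound hdiff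
    have h := (fourth_cumulant_difference_bound_general (α := 2 * H - 2) (β := H - 1)
      (by linarith) ⟨by linarith, by linarith⟩ hC₀.le (zero_le_one.trans hT) hρ₁ hρ₂ symm₁ symm₂
      (fun s t hs hst htT => hbound s t hs.le hst htT.le)
      (fun s t hs hst htT => hdiff s t hs.le hst htT.le)).2
    rwa [sub_add_cancel] at h
end

section
/- Let β > 0 and θ > 0. There exists a positive constant C such that for every s > 0, e^(−θs) ∫₀^s e^(θr) r^(β−1) dr ≤ C · min(s^(β−1), s^β). In particular, if β ∈ (0,1), there exists a positive constant C such that for every s > 0, e^(−θs) ∫₀^s e^(θr) r^(β−1) dr ≤ C · min(1, s^(β−1)). -/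
open MeasureTheory Real Set Filter

/-!
Let `I = ∫₀^s e^{θ r} r^a dr` with `a = β - 1`. Bounding `e^{θ r}` by `e^{θ s}` gives
`I ≤ e^{θ s} s^{a+1} / (a + 1)`. For the other bound, write `s = (s - r) + r` under the integral in
`s I = ∫₀^s (s - r) e^{θ r} r^a dr + ∫₀^s e^{θ r} r^{a+1} dr`. In the first term
`θ (s - r) ≤ e^{θ (s - r)}` absorbs the factor `s - r`, and in the second `r^{a+1} ≤ s^{a+1}`, so
that `s I ≤ (1 + 1 / (a + 1)) / θ * e^{θ s} s^{a+1}`.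
-/

section

variable {a θ r s : ℝ}

lemma sub_mul_exp_mul_le (hθ : 0 < θ) (r s : ℝ) : (s - r) * exp (θ * r) ≤ exp (θ * s) / θ := by
  have hlin : θ * (s - r) ≤ exp (θ * (s - r)) := by linarith [add_one_le_exp (θ * (s - r))]
  rw [le_div_iff₀ hθ]
  calc (s - r) * exp (θ * r) * θ = θ * (s - r) * exp (θ * r) := by ring
    _ ≤ exp (θ * (s - r)) * exp (θ * r) := by gcongr
    _ = exp (θ * s) := by rw [← exp_add]; ring_nf

lemma mul_exp_mul_rpow_le (ha : -1 ≤ a) (hθ : 0 < θ) (hr : 0 < r) (hrs : r ≤ s) :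
    s * (exp (θ * r) * r ^ a) ≤ exp (θ * s) / θ * r ^ a + s ^ (a + 1) * exp (θ * r) := by
  have ha' : 0 ≤ a + 1 := by linarith
  calc s * (exp (θ * r) * r ^ a)
      = (s - r) * exp (θ * r) * r ^ a + r ^ (a + 1) * exp (θ * r) := by
        rw [rpow_add_one hr.ne']; ring
    _ ≤ exp (θ * s) / θ * r ^ a + s ^ (a + 1) * exp (θ * r) := by
        gcongr
        exact sub_mul_exp_mul_le hθ r s

lemma integral_rpow_from_zero (ha : -1 < a) (s : ℝ) :
    ∫ r in (0 : ℝ)..s, r ^ a = s ^ (a + 1) / (a + 1) := by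
  rw [integral_rpow (Or.inl ha), zero_rpow (by linarith), sub_zero]

lemma integral_exp_mul_le (hθ : 0 < θ) (s : ℝ) :
    ∫ r in (0 : ℝ)..s, exp (θ * r) ≤ exp (θ * s) / θ := by
  rw [intervalIntegral.integral_comp_mul_left exp hθ.ne', integral_exp, mul_zero, exp_zero,
    smul_eq_mul, inv_mul_eq_div]
  gcongr
  exact sub_le_self _ zero_le_one

lemma intervalIntegrable_exp_mul_rpow (ha : -1 < a) (θ s : ℝ) :
    IntervalIntegrable (fun r => exp (θ * r) * r ^ a) volume 0 s :=
  (intervalIntegral.intervalIntegrable_rpow' ha).continuousOn_mul (by fun_prop)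

lemma integral_exp_mul_rpow_le_rpow_add_one (ha : -1 < a) (hθ : 0 ≤ θ) (hs : 0 ≤ s) :
    ∫ r in (0 : ℝ)..s, exp (θ * r) * r ^ a ≤ exp (θ * s) * (1 / (a + 1) * s ^ (a + 1)) := by
  calc ∫ r in (0 : ℝ)..s, exp (θ * r) * r ^ a
      ≤ ∫ r in (0 : ℝ)..s, exp (θ * s) * r ^ a := by
        refine intervalIntegral.integral_mono_on_of_le_Ioo hs
          (intervalIntegrable_exp_mul_rpow ha θ s)
          ((intervalIntegral.intervalIntegrable_rpow' ha).const_mul _) fun r ⟨hr, hrs⟩ => ?_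
        gcongr
    _ = exp (θ * s) * (1 / (a + 1) * s ^ (a + 1)) := by
        rw [intervalIntegral.integral_const_mul, integral_rpow_from_zero ha, one_div_mul_eq_div]

lemma mul_integral_exp_mul_rpow_le (ha : -1 < a) (hθ : 0 < θ) (hs : 0 ≤ s) :
    s * ∫ r in (0 : ℝ)..s, exp (θ * r) * r ^ a ≤
      exp (θ * s) * ((1 + 1 / (a + 1)) / θ * s ^ (a + 1)) := by
  have hpow : IntervalIntegrable (fun r => exp (θ * s) / θ * r ^ a) volume 0 s :=
    (intervalIntegral.intervalIntegrable_rpow' ha).const_mul _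
  have hexp : IntervalIntegrable (fun r => s ^ (a + 1) * exp (θ * r)) volume 0 s :=
    Continuous.intervalIntegrable (by fun_prop) _ _
  calc s * ∫ r in (0 : ℝ)..s, exp (θ * r) * r ^ a
      = ∫ r in (0 : ℝ)..s, s * (exp (θ * r) * r ^ a) :=
        (intervalIntegral.integral_const_mul _ _).symm
    _ ≤ ∫ r in (0 : ℝ)..s, (exp (θ * s) / θ * r ^ a + s ^ (a + 1) * exp (θ * r)) :=
        intervalIntegral.integral_mono_on_of_le_Ioo hs
          ((intervalIntegrable_exp_mul_rpow ha θ s).const_mul s) (hpow.add hexp)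
          fun r ⟨hr, hrs⟩ => mul_exp_mul_rpow_le ha.le hθ hr hrs.le
    _ = exp (θ * s) / θ * (s ^ (a + 1) / (a + 1)) +
          s ^ (a + 1) * ∫ r in (0 : ℝ)..s, exp (θ * r) := by
        rw [intervalIntegral.integral_add hpow hexp, intervalIntegral.integral_const_mul,
          intervalIntegral.integral_const_mul, integral_rpow_from_zero ha]
    _ ≤ exp (θ * s) / θ * (s ^ (a + 1) / (a + 1)) + s ^ (a + 1) * (exp (θ * s) / θ) := by
        gcongr
        exact integral_exp_mul_le hθ s
    _ = exp (θ * s) * ((1 + 1 / (a + 1)) / θ * s ^ (a + 1)) := by ring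

lemma integral_exp_mul_rpow_le_rpow (ha : -1 < a) (hθ : 0 < θ) (hs : 0 < s) :
    ∫ r in (0 : ℝ)..s, exp (θ * r) * r ^ a ≤
      exp (θ * s) * ((1 + 1 / (a + 1)) / θ * s ^ a) := by
  refine le_of_mul_le_mul_left ((mul_integral_exp_mul_rpow_le ha hθ hs.le).trans_eq ?_) hs
  rw [rpow_add_one hs.ne']
  ring

lemma exp_neg_mul_integral_exp_mul_rpow_le (ha : -1 < a) (hθ : 0 < θ) (hs : 0 < s) :
    exp (-θ * s) * ∫ r in Ioo 0 s, exp (θ * r) * r ^ a ≤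
      max ((1 + 1 / (a + 1)) / θ) (1 / (a + 1)) * min (s ^ a) (s ^ (a + 1)) := by
  rw [← integral_Ioc_eq_integral_Ioo, ← intervalIntegral.integral_of_le hs.le, neg_mul, exp_neg,
    inv_mul_le_iff₀ (exp_pos _)]
  rcases min_choice (s ^ a) (s ^ (a + 1)) with hmin | hmin <;> rw [hmin]
  · refine (integral_exp_mul_rpow_le_rpow ha hθ hs).trans ?_
    gcongr
    exact le_max_left _ _
  · refine (integral_exp_mul_rpow_le_rpow_add_one ha hθ.le hs.le).trans ?_
    gcongr
    exact le_max_right _ _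

lemma min_rpow_rpow_add_one_le (ha : -1 ≤ a) (ha' : a ≤ 0) (hs : 0 ≤ s) :
    min (s ^ a) (s ^ (a + 1)) ≤ min 1 (s ^ a) := by
  refine le_min ?_ (min_le_left _ _)
  rcases le_total s 1 with h | h
  · exact min_le_of_right_le (rpow_le_one hs h (by linarith))
  · exact min_le_of_left_le (rpow_le_one_of_one_le_of_nonpos h ha')

end

/-- Lemma 7.1 of the paper: for `β, θ > 0` the function
`s ↦ e^{-θ s} ∫₀^s e^{θ r} r^{β-1} dr` is bounded by `C ⬝ min(s^{β-1}, s^β)`;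
in particular, for `β ∈ (0,1)` it is bounded by `C ⬝ min(1, s^{β-1})`. -/
theorem ou_kernel_integral_bound (β θ : ℝ) (hβ : 0 < β) (hθ : 0 < θ) :
    (∃ C : ℝ, 0 < C ∧ ∀ s : ℝ, 0 < s →
      Real.exp (-θ * s) * ∫ r in Set.Ioo (0 : ℝ) s, Real.exp (θ * r) * r ^ (β - 1) ≤
        C * min (s ^ (β - 1)) (s ^ β)) ∧
    (β < 1 → ∃ C : ℝ, 0 < C ∧ ∀ s : ℝ, 0 < s →
      Real.exp (-θ * s) * ∫ r in Set.Ioo (0 : ℝ) s, Real.exp (θ * r) * r ^ (β - 1) ≤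
        C * min 1 (s ^ (β - 1))) := by
  have ha : -1 < β - 1 := by linarith
  have bound : ∃ C : ℝ, 0 < C ∧ ∀ s : ℝ, 0 < s →
      exp (-θ * s) * ∫ r in Ioo 0 s, exp (θ * r) * r ^ (β - 1) ≤
        C * min (s ^ (β - 1)) (s ^ β) :=
    ⟨max ((1 + 1 / β) / θ) (1 / β), lt_max_of_lt_right (one_div_pos.2 hβ), fun s hs => by
      simpa only [sub_add_cancel] using exp_neg_mul_integral_exp_mul_rpow_le ha hθ hs⟩
  refine ⟨bound, fun hβ1 => ?_⟩
  obtain ⟨C, hC, hbound⟩ := bound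
  refine ⟨C, hC, fun s hs => (hbound s hs).trans (mul_le_mul_of_nonneg_left ?_ hC.le)⟩
  simpa only [sub_add_cancel] using min_rpow_rpow_add_one_le ha.le (sub_nonpos.2 hβ1.le) hs.le
end

section
/- Let H ∈ (0,1). There exists a positive constant C such that for every t > 0, ∫₀^∞ e^(−x) ( ∫₀^t e^(y−t) (x+y)^(2H−2) dy ) dx ≤ C · min(1, t^(2H−2)). -/
open MeasureTheory Real Set Filter

/-!
For `a, b ≤ 0` the kernel `(x + y) ^ (a + b)` is at most the product kernel `x ^ a * y ^ b`, and
`y ^ b` is integrable near the origin when `b > -1`. This bounds the double integral for `t ≤ 1`.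
For `t ≥ 1` one uses the product kernel only on `y ≤ t / 2`, where `exp (y - t)` is exponentially
small in `t`; on `y ≥ t / 2` the kernel is at most `(t / 2) ^ (a + b)`, and `exp (y - t)` has
integral at most one. With the weight `w x = exp (-x)`, the exponents are `a = b = H - 1`.
-/

lemma add_rpow_add_le_rpow_mul_rpow {a b x y : ℝ} (ha : a ≤ 0) (hb : b ≤ 0) (hx : 0 < x)
    (hy : 0 < y) : (x + y) ^ (a + b) ≤ x ^ a * y ^ b := by
  rw [rpow_add (add_pos hx hy)]
  exact mul_le_mul (rpow_le_rpow_of_nonpos hx (by linarith) ha)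
    (rpow_le_rpow_of_nonpos hy (by linarith) hb) (by positivity) (by positivity)

lemma exists_exp_neg_mul_rpow_le {c : ℝ} (hc : 0 < c) (p q : ℝ) :
    ∃ D : ℝ, 0 ≤ D ∧ ∀ t : ℝ, 1 ≤ t → exp (-(c * t)) * t ^ p ≤ D * t ^ q := by
  set n := ⌈p - q⌉₊
  refine ⟨n.factorial / c ^ n, by positivity, fun t ht => ?_⟩
  have ht0 : 0 < t := one_pos.trans_le ht
  have hpow : t ^ n ≤ n.factorial / c ^ n * exp (c * t) := by
    have h := pow_div_factorial_le_exp (c * t) (by positivity) n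
    rw [div_le_iff₀ (by positivity), mul_pow] at h
    rw [div_mul_eq_mul_div, le_div_iff₀ (by positivity)]
    linarith
  calc exp (-(c * t)) * t ^ p = exp (-(c * t)) * t ^ (p - q) * t ^ q := by
        rw [mul_assoc, ← rpow_add ht0, sub_add_cancel]
    _ ≤ exp (-(c * t)) * t ^ n * t ^ q := by
        rw [← rpow_natCast t n]
        gcongr
        exact Nat.le_ceil _
    _ ≤ n.factorial / c ^ n * t ^ q := by
        gcongr
        rwa [exp_neg, inv_mul_le_iff₀ (exp_pos _), mul_comm]

lemma setIntegral_Ioo_rpow {b t : ℝ} (hb : -1 < b) (ht : 0 ≤ t) :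
    ∫ y in Ioo 0 t, y ^ b = t ^ (b + 1) / (b + 1) := by
  rw [← integral_Ioc_eq_integral_Ioo, ← intervalIntegral.integral_of_le ht,
    integral_rpow (Or.inl hb), zero_rpow (by linarith), sub_zero]

lemma integrableOn_Ioo_exp_sub (s t : ℝ) : IntegrableOn (fun y : ℝ => exp (y - t)) (Ioo s t) :=
  (Continuous.integrableOn_Icc (by fun_prop)).mono_set Ioo_subset_Icc_self

lemma setIntegral_Ioo_exp_sub_le_one {s t : ℝ} (hst : s ≤ t) :
    ∫ y in Ioo s t, exp (y - t) ≤ 1 := by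
  rw [← integral_Ioc_eq_integral_Ioo, ← intervalIntegral.integral_of_le hst,
    intervalIntegral.integral_comp_sub_right (fun y => exp y), integral_exp, sub_self, exp_zero]
  exact sub_le_self 1 (exp_nonneg _)

lemma integral_mul_integral_le_of_le_mul_add {α β : Type*} [MeasurableSpace α]
    [MeasurableSpace β] {μ : Measure α} {ν : Measure β} {w f : α → ℝ} {g h : β → ℝ}
    {K : α → β → ℝ} (hw₀ : 0 ≤ᵐ[μ] w) (hw : Integrable w μ)
    (hwf : Integrable (fun x => w x * f x) μ) (hg : Integrable g ν) (hh : Integrable h ν)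
    (hK₀ : ∀ᵐ x ∂μ, 0 ≤ᵐ[ν] K x) (hK : ∀ᵐ x ∂μ, ∀ᵐ y ∂ν, K x y ≤ f x * g y + h y) :
    ∫ x, w x * ∫ y, K x y ∂ν ∂μ ≤
      (∫ x, w x * f x ∂μ) * ∫ y, g y ∂ν + (∫ x, w x ∂μ) * ∫ y, h y ∂ν := by
  have inner_le : ∀ᵐ x ∂μ, ∫ y, K x y ∂ν ≤ f x * ∫ y, g y ∂ν + ∫ y, h y ∂ν := by
    filter_upwards [hK₀, hK] with x hx₀ hx
    have hfg : Integrable (fun y => f x * g y) ν := hg.const_mul (f x)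
    rw [← integral_const_mul, ← integral_add hfg hh]
    exact integral_mono_of_nonneg hx₀ (hfg.add hh) hx
  have hwf' := hwf.mul_const (∫ y, g y ∂ν)
  have hw' := hw.mul_const (∫ y, h y ∂ν)
  rw [← integral_mul_const, ← integral_mul_const, ← integral_add hwf' hw']
  refine integral_mono_of_nonneg ?_ (hwf'.add hw') ?_
  · filter_upwards [hw₀, hK₀] with x hwx hKx using mul_nonneg hwx (integral_nonneg_of_ae hKx)
  · filter_upwards [hw₀, inner_le] with x hwx hx
    calc w x * ∫ y, K x y ∂ν ≤ w x * (f x * ∫ y, g y ∂ν + ∫ y, h y ∂ν) :=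
          mul_le_mul_of_nonneg_left hx hwx
      _ = w x * f x * ∫ y, g y ∂ν + w x * ∫ y, h y ∂ν := by ring

section Kernel

variable {a b t : ℝ}

lemma exp_sub_mul_add_rpow_le_rpow_mul_rpow {x y : ℝ} (ha : a ≤ 0) (hb : b ≤ 0) (hx : 0 < x)
    (hy : y ∈ Ioo 0 t) : exp (y - t) * (x + y) ^ (a + b) ≤ x ^ a * y ^ b := by
  have hxy : 0 < x + y := add_pos hx hy.1
  have hexp : exp (y - t) ≤ 1 := exp_le_one_iff.2 (sub_nonpos.2 hy.2.le)
  exact (mul_le_of_le_one_left (by positivity) hexp).trans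
    (add_rpow_add_le_rpow_mul_rpow ha hb hx hy.1)

lemma exp_sub_mul_add_rpow_le_add {x y : ℝ} (ha : a ≤ 0) (hb : b ≤ 0) (hx : 0 < x)
    (hy : y ∈ Ioo 0 t) :
    exp (y - t) * (x + y) ^ (a + b) ≤
      x ^ a * (exp (-(1 / 2 * t)) * y ^ b) + (t / 2) ^ (a + b) * exp (y - t) := by
  have hy₀ : 0 < y := hy.1
  have ht : 0 < t := hy₀.trans hy.2
  rcases le_total y (t / 2) with hyt | hyt
  · calc exp (y - t) * (x + y) ^ (a + b) ≤ exp (-(1 / 2 * t)) * (x ^ a * y ^ b) := by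
          gcongr
          · linarith
          · exact add_rpow_add_le_rpow_mul_rpow ha hb hx hy₀
      _ = x ^ a * (exp (-(1 / 2 * t)) * y ^ b) := by ring
      _ ≤ _ := le_add_of_nonneg_right (by positivity)
  · calc exp (y - t) * (x + y) ^ (a + b) ≤ exp (y - t) * (t / 2) ^ (a + b) := by
          gcongr exp (y - t) * ?_
          exact rpow_le_rpow_of_nonpos (by positivity) (by linarith) (by linarith)
      _ = (t / 2) ^ (a + b) * exp (y - t) := mul_comm _ _
      _ ≤ _ := le_add_of_nonneg_left (by positivity)

variable {w : ℝ → ℝ}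

lemma setIntegral_mul_setIntegral_kernel_le {g h : ℝ → ℝ}
    (hw₀ : ∀ x, 0 < x → 0 ≤ w x) (hw : IntegrableOn w (Ioi 0))
    (hwa : IntegrableOn (fun x => w x * x ^ a) (Ioi 0))
    (hg : IntegrableOn g (Ioo 0 t)) (hh : IntegrableOn h (Ioo 0 t))
    (hK : ∀ x y, 0 < x → y ∈ Ioo 0 t →
      exp (y - t) * (x + y) ^ (a + b) ≤ x ^ a * g y + h y) :
    ∫ x in Ioi 0, w x * ∫ y in Ioo 0 t, exp (y - t) * (x + y) ^ (a + b) ≤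
      (∫ x in Ioi 0, w x * x ^ a) * (∫ y in Ioo 0 t, g y) +
        (∫ x in Ioi 0, w x) * ∫ y in Ioo 0 t, h y := by
  refine integral_mul_integral_le_of_le_mul_add ?_ hw hwa hg hh ?_ ?_
  · filter_upwards [ae_restrict_mem measurableSet_Ioi] with x hx using hw₀ x hx
  · filter_upwards [ae_restrict_mem measurableSet_Ioi] with x hx
    filter_upwards [ae_restrict_mem measurableSet_Ioo] with y hy
    exact mul_nonneg (exp_nonneg _) (rpow_nonneg (add_pos hx hy.1).le _)
  · filter_upwards [ae_restrict_mem measurableSet_Ioi] with x hx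
    filter_upwards [ae_restrict_mem measurableSet_Ioo] with y hy using hK x y hx hy

lemma setIntegral_mul_setIntegral_kernel_le_rpow (ha : a ≤ 0) (hb : -1 < b) (hb₀ : b ≤ 0)
    (hw₀ : ∀ x, 0 < x → 0 ≤ w x) (hw : IntegrableOn w (Ioi 0))
    (hwa : IntegrableOn (fun x => w x * x ^ a) (Ioi 0)) (ht : 0 < t) :
    ∫ x in Ioi 0, w x * ∫ y in Ioo 0 t, exp (y - t) * (x + y) ^ (a + b) ≤
      (∫ x in Ioi 0, w x * x ^ a) / (b + 1) * t ^ (b + 1) := by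
  have hrpow : IntegrableOn (fun y : ℝ => y ^ b) (Ioo 0 t) :=
    (intervalIntegral.integrableOn_Ioo_rpow_iff ht).2 hb
  refine (setIntegral_mul_setIntegral_kernel_le (h := fun _ => 0) hw₀ hw hwa hrpow
    integrableOn_zero fun x y hx hy => ?_).trans_eq ?_
  · rw [add_zero]
    exact exp_sub_mul_add_rpow_le_rpow_mul_rpow ha hb₀ hx hy
  · rw [setIntegral_Ioo_rpow hb ht.le, integral_zero]
    ring

lemma setIntegral_mul_setIntegral_kernel_le_exp_mul_rpow_add (ha : a ≤ 0) (hb : -1 < b)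
    (hb₀ : b ≤ 0) (hw₀ : ∀ x, 0 < x → 0 ≤ w x) (hw : IntegrableOn w (Ioi 0))
    (hwa : IntegrableOn (fun x => w x * x ^ a) (Ioi 0)) (ht : 0 < t) :
    ∫ x in Ioi 0, w x * ∫ y in Ioo 0 t, exp (y - t) * (x + y) ^ (a + b) ≤
      (∫ x in Ioi 0, w x * x ^ a) / (b + 1) * (exp (-(1 / 2 * t)) * t ^ (b + 1)) +
        (∫ x in Ioi 0, w x) * (t / 2) ^ (a + b) := by
  have hrpow : IntegrableOn (fun y : ℝ => y ^ b) (Ioo 0 t) :=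
    (intervalIntegral.integrableOn_Ioo_rpow_iff ht).2 hb
  have hW : 0 ≤ ∫ x in Ioi 0, w x := setIntegral_nonneg measurableSet_Ioi hw₀
  refine (setIntegral_mul_setIntegral_kernel_le hw₀ hw hwa (hrpow.const_mul _)
    ((integrableOn_Ioo_exp_sub 0 t).const_mul _)
    fun x y hx hy => exp_sub_mul_add_rpow_le_add ha hb₀ hx hy).trans ?_
  rw [integral_const_mul, integral_const_mul, setIntegral_Ioo_rpow hb ht.le]
  refine add_le_add (le_of_eq (by ring)) ?_
  gcongr
  exact mul_le_of_le_one_right (by positivity) (setIntegral_Ioo_exp_sub_le_one ht.le)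

theorem double_exponential_kernel_bound_general (ha : a ≤ 0) (hb : -1 < b) (hb₀ : b ≤ 0)
    (hw₀ : ∀ x, 0 < x → 0 ≤ w x) (hw : IntegrableOn w (Ioi 0))
    (hwa : IntegrableOn (fun x => w x * x ^ a) (Ioi 0)) :
    ∃ C : ℝ, 0 < C ∧ ∀ t : ℝ, 0 < t →
      (∫ x in Ioi 0, w x * ∫ y in Ioo 0 t, exp (y - t) * (x + y) ^ (a + b)) ≤
        C * min 1 (t ^ (a + b)) := by
  obtain ⟨D, hD, hexp⟩ := exists_exp_neg_mul_rpow_le one_half_pos (b + 1) (a + b)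
  set A := (∫ x in Ioi 0, w x * x ^ a) / (b + 1)
  set B := (∫ x in Ioi 0, w x) / 2 ^ (a + b)
  have hA : 0 ≤ A := div_nonneg (setIntegral_nonneg measurableSet_Ioi fun x hx =>
    mul_nonneg (hw₀ x hx) (rpow_nonneg hx.le a)) (by linarith)
  have hB : 0 ≤ B := div_nonneg (setIntegral_nonneg measurableSet_Ioi hw₀) (by positivity)
  have hAD : 0 ≤ A * D := mul_nonneg hA hD
  refine ⟨A + A * D + B + 1, by positivity, fun t ht => ?_⟩
  rcases le_total t 1 with ht₁ | ht₁
  · rw [min_eq_left (one_le_rpow_of_pos_of_le_one_of_nonpos ht ht₁ (by linarith)), mul_one]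
    calc _ ≤ A * t ^ (b + 1) :=
          setIntegral_mul_setIntegral_kernel_le_rpow ha hb hb₀ hw₀ hw hwa ht
      _ ≤ A := mul_le_of_le_one_right hA (rpow_le_one ht.le ht₁ (by linarith))
      _ ≤ A + A * D + B + 1 := by linarith
  · rw [min_eq_right (rpow_le_one_of_one_le_of_nonpos ht₁ (by linarith))]
    calc _ ≤ A * (exp (-(1 / 2 * t)) * t ^ (b + 1)) + (∫ x in Ioi 0, w x) * (t / 2) ^ (a + b) :=
          setIntegral_mul_setIntegral_kernel_le_exp_mul_rpow_add ha hb hb₀ hw₀ hw hwa ht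
      _ ≤ A * (D * t ^ (a + b)) + B * t ^ (a + b) := by
          have hhalf : (∫ x in Ioi 0, w x) * (t / 2) ^ (a + b) = B * t ^ (a + b) := by
            rw [div_rpow ht.le zero_le_two, mul_div_assoc', div_mul_eq_mul_div]
          exact add_le_add (mul_le_mul_of_nonneg_left (hexp t ht₁) hA) hhalf.le
      _ = (A * D + B) * t ^ (a + b) := by ring
      _ ≤ (A + A * D + B + 1) * t ^ (a + b) :=
          mul_le_mul_of_nonneg_right (by linarith) (by positivity)

end Kernel

/-- Lemma 7.2 of the paper: for `H ∈ (0,1)` there is a constant `C > 0` such that for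
all `t > 0`, `∫₀^∞ e^{-x} ∫₀^t e^{y-t} (x+y)^{2H-2} dy dx ≤ C ⬝ min(1, t^{2H-2})`. -/
theorem double_exponential_kernel_bound (H : ℝ) (hH : H ∈ Set.Ioo (0 : ℝ) 1) :
    ∃ C : ℝ, 0 < C ∧ ∀ t : ℝ, 0 < t →
      (∫ x in Set.Ioi (0 : ℝ),
        Real.exp (-x) * ∫ y in Set.Ioo (0 : ℝ) t, Real.exp (y - t) * (x + y) ^ (2 * H - 2)) ≤
      C * min 1 (t ^ (2 * H - 2)) := by
  rw [show 2 * H - 2 = (H - 1) + (H - 1) by ring]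
  exact double_exponential_kernel_bound_general (by linarith [hH.2]) (by linarith [hH.1])
    (by linarith [hH.2]) (fun x _ => exp_nonneg (-x)) (integrableOn_exp_neg_Ioi 0)
    (GammaIntegral_convergent hH.1)
end

section
/- Let H ∈ (0,1). Then lim_{t→∞} [ ∫₀^t e^{y} ( ∫₀^∞ e^{−x} (x+y)^(2H−2) dx ) dy ] / ( e^{t} t^(2H−2) ) = 1. -/
open MeasureTheory Real Set Filter

/-!
Put `φ y = ∫₀^∞ e^{-x} (x + y)^p dx` with `p = 2 H - 2`. Dividing by `y ^ p` gives
`∫₀^∞ e^{-x} (1 + x / y)^p dx`, which tends to `1` by dominated convergence, so `φ y ~ y ^ p`. Hence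
`e^y φ y ~ e^y y^p ~ (e^y y^p)'`, and since `e^t t^p → ∞`, L'Hôpital's rule in integral form lets us
integrate this equivalence once `φ` is known to be integrable at `0`. For `p > -2` it is: choosing
`0 ≤ a < 1` with `p + a > -1`, the bound `(x + y)^p ≤ y^{-a} (x + y)^{p + a}` and the substitution
`u = x + y` give `φ y ≤ y^{-a} e^y Γ(p + a + 1)`.
-/

open Asymptotics
open scoped Topology

section LHopital

variable {E : Type*} [NormedAddCommGroup E] [NormedSpace ℝ E] {G g : ℝ → ℝ} {a : ℝ}

theorem intervalIntegrable_of_hasDerivAt_of_nonneg {b : ℝ} (hab : a ≤ b)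
    (hG : ∀ x ∈ Icc a b, HasDerivAt G (g x) x) (hg : ∀ x ∈ Icc a b, 0 ≤ g x) :
    IntervalIntegrable g volume a b := by
  rw [intervalIntegrable_iff_integrableOn_Ioc_of_le hab]
  exact intervalIntegral.integrableOn_deriv_of_nonneg
    (fun x hx => (hG x hx).continuousAt.continuousWithinAt)
    (fun x hx => hG x (Ioo_subset_Icc_self hx)) fun x hx => hg x (Ioo_subset_Icc_self hx)

theorem norm_integral_le_mul_sub_of_norm_le_deriv {f : ℝ → E} {b c : ℝ} (hab : a ≤ b)
    (hG : ∀ x ∈ Icc a b, HasDerivAt G (g x) x) (hg : ∀ x ∈ Icc a b, 0 ≤ g x)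
    (hfg : ∀ x ∈ Icc a b, ‖f x‖ ≤ c * g x) :
    ‖∫ x in a..b, f x‖ ≤ c * (G b - G a) := by
  have hg_int := intervalIntegrable_of_hasDerivAt_of_nonneg hab hG hg
  calc ‖∫ x in a..b, f x‖
      ≤ ∫ x in a..b, c * g x :=
        intervalIntegral.norm_integral_le_of_norm_le hab
          (ae_of_all _ fun x hx => hfg x (Ioc_subset_Icc_self hx)) (hg_int.const_mul c)
    _ = c * (G b - G a) := by
        rw [intervalIntegral.integral_const_mul,
          intervalIntegral.integral_eq_sub_of_hasDerivAt (by rwa [uIcc_of_le hab]) hg_int]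

theorem isLittleO_integral_of_isLittleO_deriv {f : ℝ → E}
    (hf : ∀ b ≥ a, IntervalIntegrable f volume a b) (hG : ∀ᶠ x in atTop, HasDerivAt G (g x) x)
    (hg : ∀ᶠ x in atTop, 0 ≤ g x) (hG_top : Tendsto G atTop atTop) (hfg : f =o[atTop] g) :
    (fun t => ∫ x in a..t, f x) =o[atTop] G := by
  refine isLittleO_iff.2 fun c hc => ?_
  have hfg' : ∀ᶠ x in atTop, ‖f x‖ ≤ c / 2 * g x := by
    filter_upwards [hfg.bound (half_pos hc), hg] with x hfx hgx
    rwa [norm_of_nonneg hgx] at hfx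
  obtain ⟨b, hab, hGb, hG, hg, hfg'⟩ :=
    ((eventually_ge_atTop a).and <| (hG_top.eventually_ge_atTop 0).and <|
      (eventually_forall_ge_atTop.2 hG).and <| (eventually_forall_ge_atTop.2 hg).and <|
        eventually_forall_ge_atTop.2 hfg').exists
  filter_upwards [eventually_ge_atTop b,
    hG_top.eventually_ge_atTop (‖∫ x in a..b, f x‖ / (c / 2))] with t hbt hGt
  have hhead : ‖∫ x in a..b, f x‖ ≤ c / 2 * G t := (div_le_iff₀' (half_pos hc)).1 hGt
  have htail : ‖∫ x in b..t, f x‖ ≤ c / 2 * (G t - G b) :=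
    norm_integral_le_mul_sub_of_norm_le_deriv hbt (fun x hx => hG x hx.1)
      (fun x hx => hg x hx.1) (fun x hx => hfg' x hx.1)
  have hsplit : (∫ x in a..b, f x) + ∫ x in b..t, f x = ∫ x in a..t, f x :=
    intervalIntegral.integral_add_adjacent_intervals (hf b hab)
      ((hf b hab).symm.trans (hf t (hab.trans hbt)))
  calc ‖∫ x in a..t, f x‖
      ≤ ‖∫ x in a..b, f x‖ + ‖∫ x in b..t, f x‖ := hsplit ▸ norm_add_le _ _
    _ ≤ c / 2 * G t + c / 2 * (G t - G b) := add_le_add hhead htail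
    _ ≤ c * G t := by linarith [mul_nonneg hc.le hGb]
    _ ≤ c * ‖G t‖ := by gcongr; exact le_norm_self _

theorem isEquivalent_integral_of_isEquivalent_deriv {f : ℝ → ℝ}
    (hf : ∀ b ≥ a, IntervalIntegrable f volume a b) (hG : ∀ᶠ x in atTop, HasDerivAt G (g x) x)
    (hg : ∀ᶠ x in atTop, 0 ≤ g x) (hG_top : Tendsto G atTop atTop) (hfg : f ~[atTop] g) :
    (fun t => ∫ x in a..t, f x) ~[atTop] G := by
  obtain ⟨b, hab, hG', hg'⟩ :=
    ((eventually_ge_atTop a).and <| (eventually_forall_ge_atTop.2 hG).and <|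
      eventually_forall_ge_atTop.2 hg).exists
  have hf_int : ∀ t ≥ b, IntervalIntegrable f volume b t := fun t hbt =>
    (hf b hab).symm.trans (hf t (hab.trans hbt))
  have hg_int : ∀ t ≥ b, IntervalIntegrable g volume b t := fun t hbt =>
    intervalIntegrable_of_hasDerivAt_of_nonneg hbt (fun x hx => hG' x hx.1) fun x hx => hg' x hx.1
  have hdiff : (fun t => ∫ x in b..t, (f - g) x) =o[atTop] G :=
    isLittleO_integral_of_isLittleO_deriv (fun t hbt => (hf_int t hbt).sub (hg_int t hbt))
      hG hg hG_top hfg.isLittleO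
  have hconst : (fun _ => (∫ x in a..b, f x) - G b) =o[atTop] G :=
    isLittleO_const_left.2 (Or.inr (tendsto_norm_atTop_atTop.comp hG_top))
  refine IsLittleO.isEquivalent ((hconst.add hdiff).congr' ?_ EventuallyEq.rfl)
  filter_upwards [eventually_ge_atTop b] with t hbt
  have hsub : ∫ x in b..t, (f - g) x = (∫ x in b..t, f x) - (G t - G b) := by
    rw [← intervalIntegral.integral_eq_sub_of_hasDerivAt
      (by rw [uIcc_of_le hbt]; exact fun x hx => hG' x hx.1) (hg_int t hbt)]
    exact intervalIntegral.integral_sub (hf_int t hbt) (hg_int t hbt)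
  rw [hsub, Pi.sub_apply,
    ← intervalIntegral.integral_add_adjacent_intervals (hf b hab) (hf_int t hbt)]
  ring

end LHopital

/-- The moment `E[(X + y) ^ p]` of a standard exponential variable `X`, that is, the inner integral
of the theorem for `p = 2 * H - 2`. -/
noncomputable def shiftedExpMoment (p y : ℝ) : ℝ :=
  ∫ x in Ioi (0 : ℝ), exp (-x) * (x + y) ^ p

section ShiftedExpMoment

variable {p y : ℝ}

theorem integrableOn_exp_neg_mul_rpow_Ioi (p : ℝ) (hy : 0 < y) :
    IntegrableOn (fun u : ℝ => exp (-u) * u ^ p) (Ioi y) := by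
  refine integrable_of_isBigO_exp_neg one_half_pos (fun u hu => ?_)
    (Gamma_integrand_isLittleO p).isBigO
  have hu : u ≠ 0 := (hy.trans_le hu).ne'
  exact ContinuousAt.continuousWithinAt (by fun_prop (disch := simp [hu]))

theorem exp_neg_mul_add_rpow_eq (p x y : ℝ) :
    exp (-x) * (x + y) ^ p = exp y * (exp (-(x + y)) * (x + y) ^ p) := by
  rw [← mul_assoc, ← exp_add]
  ring_nf

theorem integrableOn_exp_neg_mul_add_rpow (p : ℝ) (hy : 0 < y) :
    IntegrableOn (fun x : ℝ => exp (-x) * (x + y) ^ p) (Ioi 0) := by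
  have hshift : IntegrableOn (fun x : ℝ => exp (-(x + y)) * (x + y) ^ p) (Ioi 0) := by
    simpa [Function.comp_def] using
      ((measurePreserving_add_right volume y).integrableOn_comp_preimage
        (measurableEmbedding_addRight y)).2 (integrableOn_exp_neg_mul_rpow_Ioi p hy)
  simpa only [exp_neg_mul_add_rpow_eq, IntegrableOn] using hshift.const_mul (exp y)

theorem shiftedExpMoment_eq_exp_mul_integral_Ioi (p y : ℝ) :
    shiftedExpMoment p y = exp y * ∫ u in Ioi y, exp (-u) * u ^ p := by
  have hshift : ∫ x in Ioi (0 : ℝ), exp (-(x + y)) * (x + y) ^ p =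
      ∫ u in Ioi y, exp (-u) * u ^ p := by
    simpa using (measurePreserving_add_right volume y).setIntegral_preimage_emb
      (measurableEmbedding_addRight y) (fun u => exp (-u) * u ^ p) (Ioi y)
  simp only [shiftedExpMoment, exp_neg_mul_add_rpow_eq, integral_const_mul, hshift]

theorem one_add_div_rpow_le {x : ℝ} (p : ℝ) (hx : 0 ≤ x) (hy : 1 ≤ y) :
    (1 + x / y) ^ p ≤ (1 + x) ^ |p| := by
  have hbase : 1 ≤ 1 + x / y := le_add_of_nonneg_right (by positivity)
  calc (1 + x / y) ^ p ≤ (1 + x / y) ^ |p| := rpow_le_rpow_of_exponent_le hbase (le_abs_self p)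
    _ ≤ (1 + x) ^ |p| := by gcongr; exact div_le_self hx hy

theorem shiftedExpMoment_eq_rpow_mul (p : ℝ) (hy : 0 < y) :
    shiftedExpMoment p y = y ^ p * ∫ x in Ioi (0 : ℝ), exp (-x) * (1 + x / y) ^ p := by
  rw [shiftedExpMoment, ← integral_const_mul]
  refine setIntegral_congr_fun measurableSet_Ioi fun x hx => ?_
  have hx : 0 < x := hx
  have hfactor : x + y = y * (1 + x / y) := by field_simp; ring
  simp only [hfactor, mul_rpow hy.le (by positivity : 0 ≤ 1 + x / y)]
  ring

theorem tendsto_integral_exp_neg_mul_one_add_div_rpow (p : ℝ) :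
    Tendsto (fun y : ℝ => ∫ x in Ioi (0 : ℝ), exp (-x) * (1 + x / y) ^ p) atTop (𝓝 1) := by
  have hdom : Tendsto (fun y : ℝ => ∫ x in Ioi (0 : ℝ), exp (-x) * (1 + x / y) ^ p) atTop
      (𝓝 (∫ x in Ioi (0 : ℝ), exp (-x))) := by
    refine tendsto_integral_filter_of_dominated_convergence
      (fun x => exp (-x) * (x + 1) ^ |p|) (Eventually.of_forall fun y => by fun_prop) ?_
      (integrableOn_exp_neg_mul_add_rpow |p| one_pos) (ae_of_all _ fun x => ?_)
    · filter_upwards [eventually_ge_atTop 1] with y hy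
      filter_upwards [ae_restrict_mem measurableSet_Ioi] with x (hx : 0 < x)
      rw [norm_of_nonneg (by positivity), add_comm x 1]
      gcongr
      exact one_add_div_rpow_le p hx.le hy
    · have hbase : Tendsto (fun y : ℝ => 1 + x / y) atTop (𝓝 1) := by
        simpa using (tendsto_id.const_div_atTop x).const_add 1
      simpa using (hbase.rpow_const (Or.inl one_ne_zero)).const_mul (exp (-x))
  rwa [integral_exp_neg_Ioi_zero] at hdom

theorem shiftedExpMoment_isEquivalent_rpow (p : ℝ) :
    shiftedExpMoment p ~[atTop] fun y => y ^ p := by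
  refine isEquivalent_of_tendsto_one
    ((tendsto_integral_exp_neg_mul_one_add_div_rpow p).congr' ?_)
  filter_upwards [eventually_gt_atTop 0] with y hy
  rw [Pi.div_apply, shiftedExpMoment_eq_rpow_mul p hy,
    mul_div_cancel_left₀ _ (rpow_pos_of_pos hy p).ne']

theorem stronglyMeasurable_shiftedExpMoment (p : ℝ) :
    StronglyMeasurable (shiftedExpMoment p) := by
  refine StronglyMeasurable.integral_prod_right (f := fun y x : ℝ => exp (-x) * (x + y) ^ p) ?_
  exact Measurable.stronglyMeasurable (by fun_prop)

theorem shiftedExpMoment_nonneg (p : ℝ) (hy : 0 ≤ y) : 0 ≤ shiftedExpMoment p y :=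
  setIntegral_nonneg measurableSet_Ioi fun _ hx =>
    mul_nonneg (exp_pos _).le (rpow_nonneg (add_nonneg (le_of_lt hx) hy) _)

theorem shiftedExpMoment_le_exp_mul_Gamma {s : ℝ} (hs : 0 < s) (hy : 0 ≤ y) :
    shiftedExpMoment (s - 1) y ≤ exp y * Gamma s := by
  rw [shiftedExpMoment_eq_exp_mul_integral_Ioi, Gamma_eq_integral hs]
  gcongr ?_ * ?_
  exact setIntegral_mono_set (GammaIntegral_convergent hs)
    ((ae_restrict_mem measurableSet_Ioi).mono fun u (hu : 0 < u) => by positivity)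
    (Ioi_subset_Ioi hy).eventuallyLE

theorem shiftedExpMoment_le_rpow_neg_mul {a : ℝ} (p : ℝ) (ha : 0 ≤ a) (hy : 0 < y) :
    shiftedExpMoment p y ≤ y ^ (-a) * shiftedExpMoment (p + a) y := by
  rw [shiftedExpMoment, shiftedExpMoment, ← integral_const_mul]
  refine setIntegral_mono_on (integrableOn_exp_neg_mul_add_rpow p hy)
    ((integrableOn_exp_neg_mul_add_rpow (p + a) hy).const_mul _) measurableSet_Ioi
    fun x (hx : 0 < x) => ?_
  calc exp (-x) * (x + y) ^ p = (x + y) ^ (-a) * (exp (-x) * (x + y) ^ (p + a)) := by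
        rw [mul_left_comm, ← rpow_add (by positivity)]; ring_nf
    _ ≤ y ^ (-a) * (exp (-x) * (x + y) ^ (p + a)) := by
        gcongr ?_ * _
        exact rpow_le_rpow_of_nonpos hy (by linarith) (by linarith)

theorem intervalIntegrable_shiftedExpMoment {t : ℝ} (hp : -2 < p) (ht : 0 ≤ t) :
    IntervalIntegrable (shiftedExpMoment p) volume 0 t := by
  obtain ⟨a, ha₀, ha₁, hpa⟩ : ∃ a, 0 ≤ a ∧ a < 1 ∧ 0 < p + a + 1 := by
    obtain ⟨a, ha, ha₁⟩ := exists_between (max_lt (by linarith : -(p + 1) < 1) zero_lt_one)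
    exact ⟨a, (max_lt_iff.1 ha).2.le, ha₁, by linarith [(max_lt_iff.1 ha).1]⟩
  have hbound : IntervalIntegrable (fun y : ℝ => y ^ (-a) * (exp t * Gamma (p + a + 1)))
      volume 0 t := (intervalIntegral.intervalIntegrable_rpow' (by linarith)).mul_const _
  refine hbound.mono_fun' (stronglyMeasurable_shiftedExpMoment p).aestronglyMeasurable ?_
  rw [uIoc_of_le ht]
  filter_upwards [ae_restrict_mem measurableSet_Ioc] with y ⟨hy, hyt⟩
  rw [norm_of_nonneg (shiftedExpMoment_nonneg p hy.le)]
  calc shiftedExpMoment p y ≤ y ^ (-a) * shiftedExpMoment (p + a) y :=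
        shiftedExpMoment_le_rpow_neg_mul p ha₀ hy
    _ ≤ y ^ (-a) * (exp y * Gamma (p + a + 1)) := by
        gcongr
        simpa using shiftedExpMoment_le_exp_mul_Gamma hpa hy.le
    _ ≤ y ^ (-a) * (exp t * Gamma (p + a + 1)) := by
        gcongr

end ShiftedExpMoment

theorem tendsto_exp_mul_rpow_atTop (p : ℝ) :
    Tendsto (fun t : ℝ => exp t * t ^ p) atTop atTop := by
  refine (tendsto_exp_div_rpow_atTop (-p)).congr' ?_
  filter_upwards [eventually_ge_atTop 0] with t ht
  rw [rpow_neg ht, div_inv_eq_mul]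

theorem hasDerivAt_exp_mul_rpow {y : ℝ} (p : ℝ) (hy : y ≠ 0) :
    HasDerivAt (fun y : ℝ => exp y * y ^ p) (exp y * y ^ p * (1 + p / y)) y := by
  refine ((hasDerivAt_exp y).mul (hasDerivAt_rpow_const (Or.inl hy))).congr_deriv ?_
  rw [rpow_sub_one hy]
  ring

theorem exp_mul_rpow_isEquivalent_deriv (p : ℝ) :
    (fun y : ℝ => exp y * y ^ p) ~[atTop] fun y => exp y * y ^ p * (1 + p / y) := by
  have hfactor : Tendsto (fun y : ℝ => 1 + p / y) atTop (𝓝 1) := by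
    simpa using (tendsto_id.const_div_atTop p).const_add 1
  simpa [Pi.mul_def, Function.const] using (IsEquivalent.refl (u := fun y : ℝ => exp y * y ^ p)).mul
    ((isEquivalent_const_iff_tendsto one_ne_zero).2 hfactor).symm

theorem isEquivalent_integral_exp_mul_shiftedExpMoment {p : ℝ} (hp : -2 < p) :
    (fun t => ∫ y in (0 : ℝ)..t, exp y * shiftedExpMoment p y) ~[atTop]
      fun t => exp t * t ^ p := by
  have hderiv := exp_mul_rpow_isEquivalent_deriv p
  refine isEquivalent_integral_of_isEquivalent_deriv
    (fun t ht => (intervalIntegrable_shiftedExpMoment hp ht).continuousOn_mul (by fun_prop))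
    ?_ ?_ (tendsto_exp_mul_rpow_atTop p)
    ((IsEquivalent.refl.mul (shiftedExpMoment_isEquivalent_rpow p)).trans hderiv)
  · filter_upwards [eventually_ne_atTop 0] with y hy using hasDerivAt_exp_mul_rpow p hy
  · exact hderiv.symm.eventually_nonneg <|
      (tendsto_exp_mul_rpow_atTop p).eventually_ge_atTop 0

theorem exponential_kernel_ratio_limit_general (H : ℝ) (hH : 0 < H) :
    Tendsto
      (fun t : ℝ =>
        (∫ y in Ioo (0 : ℝ) t,
          exp y * ∫ x in Ioi (0 : ℝ), exp (-x) * (x + y) ^ (2 * H - 2)) /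
        (exp t * t ^ (2 * H - 2)))
      atTop (𝓝 1) := by
  have hne : ∀ᶠ t : ℝ in atTop, exp t * t ^ (2 * H - 2) ≠ 0 :=
    (tendsto_exp_mul_rpow_atTop (2 * H - 2)).eventually_ne_atTop 0
  have hequiv := isEquivalent_integral_exp_mul_shiftedExpMoment (p := 2 * H - 2) (by linarith)
  refine ((isEquivalent_iff_tendsto_one hne).1 hequiv).congr' ?_
  filter_upwards [eventually_ge_atTop 0] with t ht
  simp only [Pi.div_apply, intervalIntegral.integral_of_le ht, integral_Ioc_eq_integral_Ioo,
    shiftedExpMoment]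

/-- The limit from the proof of Lemma 7.2:
`lim_{t→∞} (∫₀^t e^y ∫₀^∞ e^{-x} (x+y)^{2H-2} dx dy) / (e^t t^{2H-2}) = 1`. -/
theorem exponential_kernel_ratio_limit (H : ℝ) (hH : H ∈ Set.Ioo (0 : ℝ) 1) :
    Filter.Tendsto
      (fun t : ℝ =>
        (∫ y in Set.Ioo (0 : ℝ) t,
          Real.exp y * ∫ x in Set.Ioi (0 : ℝ), Real.exp (-x) * (x + y) ^ (2 * H - 2)) /
        (Real.exp t * t ^ (2 * H - 2)))
      Filter.atTop (nhds 1) :=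
  exponential_kernel_ratio_limit_general H hH.1
end

section
/- Let θ > 0 and H ∈ (0,1). There exists a positive constant C, depending only on θ and H, such that for all 0 ≤ s < t, ∫₀^s e^(θ(u−s)) ( ∫_s^t e^(θ(v−t)) (v−u)^(2H−2) dv ) du ≤ C · min(1, (t−s)^(2H−2)). -/
open MeasureTheory Real Set

/-! The substitution `x = s - u`, `y = v - s`, `T = t - s` turns the integral into
`∫₀^s e^{-θx} ∫₀^T e^{-θ(T-y)} (x + y)^{-a} dy dx` with `a = 2 - 2H ∈ (0, 2)`.
The singularity at the origin is shared evenly between the variables: `xy ≤ (x + y)²` gives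
`(x + y)^{-a} ≤ x^{-a/2} y^{-a/2}`, and both factors are integrable near `0` because `a < 2`.
The decay in `T` comes from Peetre's inequality
`max(1, y)^{-a} ≤ (1 + T - y)^a max(1, T)^{-a}`, whose polynomial loss is absorbed by half of the
exponential `e^{-θ(T-y)}`, and from `max(1, T)^{-a} = min(1, T^{-a})`. -/

section ChangeOfVariables

variable {E : Type*} [NormedAddCommGroup E] [NormedSpace ℝ E]

lemma setIntegral_Ioo_comp_sub_left (f : ℝ → E) (a b c : ℝ) :
    ∫ x in Ioo a b, f (c - x) = ∫ x in Ioo (c - b) (c - a), f x := by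
  simpa using (volume.measurePreserving_sub_left c).setIntegral_preimage_emb
    (measurableEmbedding_subLeft c) f (Ioo (c - b) (c - a))

lemma setIntegral_Ioo_comp_add_left (f : ℝ → E) (a b c : ℝ) :
    ∫ x in Ioo a b, f (c + x) = ∫ x in Ioo (c + a) (c + b), f x := by
  simpa using (measurePreserving_add_left volume c).setIntegral_preimage_emb
    (measurableEmbedding_addLeft c) f (Ioo (c + a) (c + b))

lemma setIntegral_exp_mul_setIntegral_exp_mul_comp_sub (k : ℝ → ℝ) (θ s t : ℝ) :
    ∫ u in Ioo 0 s, exp (θ * (u - s)) * ∫ v in Ioo s t, exp (θ * (v - t)) * k (v - u) =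
      ∫ x in Ioo 0 s, exp (-θ * x) *
        ∫ y in Ioo 0 (t - s), exp (-θ * (t - s - y)) * k (x + y) := by
  have inner_eq (u : ℝ) : ∫ v in Ioo s t, exp (θ * (v - t)) * k (v - u) =
      ∫ y in Ioo 0 (t - s), exp (-θ * (t - s - y)) * k (s - u + y) := by
    have translate := setIntegral_Ioo_comp_add_left
      (fun v => exp (θ * (v - t)) * k (v - u)) 0 (t - s) s
    rw [add_zero, add_sub_cancel] at translate
    rw [← translate]
    congr! 4 <;> ring
  have hweight (u : ℝ) : θ * (u - s) = -θ * (s - u) := by ring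
  simp only [inner_eq, hweight]
  simpa only [sub_self, sub_zero] using setIntegral_Ioo_comp_sub_left (fun x => exp (-θ * x) *
    ∫ y in Ioo 0 (t - s), exp (-θ * (t - s - y)) * k (x + y)) 0 s s

end ChangeOfVariables

section PowerBounds

variable {a θ x y z : ℝ}

lemma add_rpow_neg_le_rpow_mul_rpow (ha : 0 ≤ a) (hx : 0 < x) (hy : 0 < y) :
    (x + y) ^ (-a) ≤ x ^ (-(a / 2)) * y ^ (-(a / 2)) := by
  have hmul_le : x * y ≤ (x + y) ^ 2 := by nlinarith
  calc (x + y) ^ (-a) = ((x + y) ^ 2) ^ (-(a / 2)) := by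
        rw [← rpow_natCast_mul (by positivity)]
        congr 1
        push_cast
        ring
    _ ≤ (x * y) ^ (-(a / 2)) :=
        rpow_le_rpow_of_nonpos (by positivity) hmul_le (by linarith)
    _ = x ^ (-(a / 2)) * y ^ (-(a / 2)) := mul_rpow hx.le hy.le

lemma max_one_rpow_neg (ha : 0 ≤ a) (hx : 0 < x) : max 1 x ^ (-a) = min 1 (x ^ (-a)) := by
  rw [(antitoneOn_rpow_Ioi_of_exponent_nonpos (neg_nonpos.2 ha)).map_max
    (mem_Ioi.2 one_pos) (mem_Ioi.2 hx), one_rpow]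

lemma max_one_rpow_neg_le_one_add_rpow_mul (ha : 0 ≤ a) (hz : 0 ≤ z) :
    max 1 y ^ (-a) ≤ (1 + z) ^ a * max 1 (y + z) ^ (-a) := by
  have hmax : max 1 (y + z) ≤ (1 + z) * max 1 y :=
    max_le (by nlinarith [le_max_left 1 y]) (by nlinarith [le_max_left 1 y, le_max_right 1 y])
  calc max 1 y ^ (-a) = (1 + z) ^ a * ((1 + z) * max 1 y) ^ (-a) := by
        rw [mul_rpow (by positivity) (by positivity), ← mul_assoc, ← rpow_add (by positivity),
          add_neg_cancel, rpow_zero, one_mul]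
    _ ≤ (1 + z) ^ a * max 1 (y + z) ^ (-a) := by
        gcongr ?_ * ?_
        exact rpow_le_rpow_of_nonpos (by positivity) hmax (by linarith)

lemma one_add_rpow_mul_exp_neg_le (ha : 0 ≤ a) (hθ : 0 < θ) (hz : 0 ≤ z) :
    (1 + z) ^ a * exp (-θ * z) ≤ (1 + 2 * a / θ) ^ a * exp (-(θ / 2) * z) := by
  -- Rescaling `1 + w ≤ exp w` by `c ≥ 1` lowers the growth rate of `(1 + z) ^ a` to `a / c`.
  set c := 1 + 2 * a / θ with hc
  have hc_one : 1 ≤ c := le_add_of_nonneg_right (by positivity)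
  have hc_pos : 0 < c := by positivity
  have hbase : 1 + z ≤ c * exp (z / c) := by
    calc 1 + z ≤ c * (z / c + 1) := by
          rw [mul_add, mul_div_cancel₀ _ hc_pos.ne']
          linarith
      _ ≤ c * exp (z / c) := by gcongr; exact add_one_le_exp _
  have hrate : a / c ≤ θ / 2 := by
    rw [div_le_iff₀ hc_pos, hc]
    field_simp
    linarith
  calc (1 + z) ^ a * exp (-θ * z) ≤ (c * exp (z / c)) ^ a * exp (-θ * z) := by gcongr
    _ = c ^ a * exp (a / c * z - θ * z) := by
        rw [mul_rpow hc_pos.le (exp_pos _).le, ← exp_mul, mul_assoc, ← exp_add]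
        ring_nf
    _ ≤ c ^ a * exp (-(θ / 2) * z) := by
        gcongr
        nlinarith

lemma exp_mul_max_one_rpow_neg_le (ha : 0 ≤ a) (hθ : 0 < θ) (hz : 0 ≤ z) :
    exp (-θ * z) * max 1 y ^ (-a) ≤
      (1 + 2 * a / θ) ^ a * max 1 (y + z) ^ (-a) * exp (-(θ / 2) * z) :=
  calc exp (-θ * z) * max 1 y ^ (-a)
      ≤ exp (-θ * z) * ((1 + z) ^ a * max 1 (y + z) ^ (-a)) := by
        gcongr
        exact max_one_rpow_neg_le_one_add_rpow_mul ha hz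
    _ = max 1 (y + z) ^ (-a) * ((1 + z) ^ a * exp (-θ * z)) := by ring
    _ ≤ max 1 (y + z) ^ (-a) * ((1 + 2 * a / θ) ^ a * exp (-(θ / 2) * z)) := by
        gcongr ?_ * ?_
        exact one_add_rpow_mul_exp_neg_le ha hθ hz
    _ = (1 + 2 * a / θ) ^ a * max 1 (y + z) ^ (-a) * exp (-(θ / 2) * z) := by ring

lemma add_rpow_neg_le_max_one_rpow_neg_mul (ha : 0 ≤ a) (hx : 0 < x) (hy : 0 < y) :
    (x + y) ^ (-a) ≤ max 1 y ^ (-a) *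
      (1 + x ^ (-(a / 2)) * indicator (Ioo 0 1) (fun r => r ^ (-(a / 2))) y) := by
  rcases lt_or_ge y 1 with hy_lt | hy_ge
  · rw [max_eq_left hy_lt.le, one_rpow, one_mul, indicator_of_mem (mem_Ioo.2 ⟨hy, hy_lt⟩)]
    linarith [add_rpow_neg_le_rpow_mul_rpow ha hx hy]
  · rw [max_eq_right hy_ge, indicator_of_notMem fun h => hy_ge.not_gt h.2, mul_zero, add_zero,
      mul_one]
    exact rpow_le_rpow_of_nonpos hy (by linarith) (by linarith)

lemma exp_mul_add_rpow_neg_le {T : ℝ} (ha : 0 ≤ a) (hθ : 0 < θ) (hx : 0 < x)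
    (hy : y ∈ Ioo 0 T) :
    exp (-θ * (T - y)) * (x + y) ^ (-a) ≤ (1 + 2 * a / θ) ^ a * max 1 T ^ (-a) *
      (exp (-(θ / 2) * (T - y)) +
        x ^ (-(a / 2)) * indicator (Ioo 0 1) (fun r => r ^ (-(a / 2))) y) := by
  set h := indicator (Ioo 0 1) (fun r : ℝ => r ^ (-(a / 2))) y
  set K := (1 + 2 * a / θ) ^ a * max 1 T ^ (-a)
  have hz : 0 ≤ T - y := sub_nonneg.2 hy.2.le
  have hh : 0 ≤ h := indicator_nonneg (fun r hr => rpow_nonneg hr.1.le _) y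
  have hexp : exp (-(θ / 2) * (T - y)) ≤ 1 := exp_le_one_iff.2 (by nlinarith)
  have hweight : exp (-θ * (T - y)) * max 1 y ^ (-a) ≤ K * exp (-(θ / 2) * (T - y)) := by
    simpa only [add_sub_cancel] using exp_mul_max_one_rpow_neg_le (y := y) ha hθ hz
  calc exp (-θ * (T - y)) * (x + y) ^ (-a)
      ≤ exp (-θ * (T - y)) * (max 1 y ^ (-a) * (1 + x ^ (-(a / 2)) * h)) := by
        gcongr
        exact add_rpow_neg_le_max_one_rpow_neg_mul ha hx hy.1
    _ = exp (-θ * (T - y)) * max 1 y ^ (-a) * (1 + x ^ (-(a / 2)) * h) := by ring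
    _ ≤ K * exp (-(θ / 2) * (T - y)) * (1 + x ^ (-(a / 2)) * h) := by gcongr
    _ = K * (exp (-(θ / 2) * (T - y)) +
          exp (-(θ / 2) * (T - y)) * (x ^ (-(a / 2)) * h)) := by ring
    _ ≤ K * (exp (-(θ / 2) * (T - y)) + x ^ (-(a / 2)) * h) := by
        gcongr ?_ * (_ + ?_)
        exact mul_le_of_le_one_left (by positivity) hexp

end PowerBounds

section IntegralBounds

variable {a r θ x : ℝ}

lemma setIntegral_Ioo_exp_neg_mul_sub_le (hθ : 0 < θ) (T : ℝ) :
    ∫ y in Ioo 0 T, exp (-θ * (T - y)) ≤ 1 / θ := by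
  rw [setIntegral_Ioo_comp_sub_left (fun z => exp (-θ * z)), sub_self, sub_zero]
  calc ∫ z in Ioo 0 T, exp (-θ * z) ≤ ∫ z in Ioi 0, exp (-θ * z) :=
        setIntegral_mono_set (exp_neg_integrableOn_Ioi 0 hθ)
          (Filter.Eventually.of_forall fun z => (exp_pos _).le) Ioo_subset_Ioi_self.eventuallyLE
    _ = 1 / θ := by
        rw [integral_exp_mul_Ioi (neg_lt_zero.2 hθ), mul_zero, exp_zero, neg_div_neg_eq]

lemma integrable_indicator_Ioo_rpow (hr : -1 < r) :
    Integrable (indicator (Ioo 0 1) fun y : ℝ => y ^ r) :=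
  ((intervalIntegral.integrableOn_Ioo_rpow_iff one_pos).2 hr).integrable_indicator
    measurableSet_Ioo

lemma integral_indicator_Ioo_rpow (hr : -1 < r) :
    ∫ y, indicator (Ioo 0 1) (fun y : ℝ => y ^ r) y = 1 / (r + 1) := by
  rw [integral_indicator measurableSet_Ioo, ← integral_Ioc_eq_integral_Ioo,
    ← intervalIntegral.integral_of_le zero_le_one, integral_rpow (Or.inl hr), one_rpow,
    zero_rpow (by linarith), sub_zero]

lemma setIntegral_exp_mul_add_rpow_neg_le (ha : 0 ≤ a) (ha_lt : a < 2) (hθ : 0 < θ) (hx : 0 < x)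
    (T : ℝ) :
    ∫ y in Ioo 0 T, exp (-θ * (T - y)) * (x + y) ^ (-a) ≤
      (1 + 2 * a / θ) ^ a * max 1 T ^ (-a) *
        (2 / θ + 1 / (1 - a / 2) * x ^ (-(a / 2))) := by
  set h := indicator (Ioo 0 1) (fun y : ℝ => y ^ (-(a / 2)))
  set K := (1 + 2 * a / θ) ^ a * max 1 T ^ (-a)
  have hh_int : Integrable h := integrable_indicator_Ioo_rpow (by linarith)
  have hexp_int : IntegrableOn (fun y => exp (-(θ / 2) * (T - y))) (Ioo 0 T) :=
    (Continuous.integrableOn_Icc (by fun_prop)).mono_set Ioo_subset_Icc_self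
  have hxh_int : IntegrableOn (fun y => x ^ (-(a / 2)) * h y) (Ioo 0 T) :=
    (hh_int.const_mul _).integrableOn
  have hexp : ∫ y in Ioo 0 T, exp (-(θ / 2) * (T - y)) ≤ 2 / θ := by
    simpa only [one_div_div] using setIntegral_Ioo_exp_neg_mul_sub_le (half_pos hθ) T
  have hh : ∫ y in Ioo 0 T, h y ≤ 1 / (1 - a / 2) := by
    rw [sub_eq_neg_add, ← integral_indicator_Ioo_rpow (by linarith)]
    exact setIntegral_le_integral hh_int <| Filter.Eventually.of_forall <|
      indicator_nonneg fun y hy => rpow_nonneg hy.1.le _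
  calc ∫ y in Ioo 0 T, exp (-θ * (T - y)) * (x + y) ^ (-a)
      ≤ ∫ y in Ioo 0 T, K * (exp (-(θ / 2) * (T - y)) + x ^ (-(a / 2)) * h y) :=
        integral_mono_of_nonneg
          (ae_restrict_of_forall_mem measurableSet_Ioo fun y hy =>
            mul_nonneg (exp_pos _).le (rpow_nonneg (add_pos hx hy.1).le _))
          ((hexp_int.add hxh_int).const_mul K)
          (ae_restrict_of_forall_mem measurableSet_Ioo fun y hy =>
            exp_mul_add_rpow_neg_le ha hθ hx hy)
    _ = K * ((∫ y in Ioo 0 T, exp (-(θ / 2) * (T - y))) +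
          (∫ y in Ioo 0 T, h y) * x ^ (-(a / 2))) := by
        rw [integral_const_mul, integral_add hexp_int hxh_int, integral_const_mul,
          mul_comm (x ^ _)]
    _ ≤ K * (2 / θ + 1 / (1 - a / 2) * x ^ (-(a / 2))) := by gcongr

lemma integrableOn_Ioi_exp_neg_mul_rpow (hr : -1 < r) (hθ : 0 < θ) :
    IntegrableOn (fun x => exp (-θ * x) * x ^ r) (Ioi 0) := by
  simpa only [rpow_one, mul_comm] using integrableOn_rpow_mul_exp_neg_mul_rpow hr one_pos hθ

lemma integral_Ioi_exp_neg_mul_rpow (hr : -1 < r) (hθ : 0 < θ) :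
    ∫ x in Ioi 0, exp (-θ * x) * x ^ r = Gamma (r + 1) / θ ^ (r + 1) := by
  have h := integral_rpow_mul_exp_neg_mul_Ioi (a := r + 1) (by linarith) hθ
  rw [add_sub_cancel_right, one_div, inv_rpow hθ.le, inv_mul_eq_div] at h
  simpa only [mul_comm (exp _), neg_mul] using h

lemma integrableOn_Ioi_exp_neg_mul_add_rpow (hr : -1 < r) (hθ : 0 < θ) (b c : ℝ) :
    IntegrableOn (fun x => exp (-θ * x) * (b + c * x ^ r)) (Ioi 0) := by
  have expand (x : ℝ) : exp (-θ * x) * (b + c * x ^ r) =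
      b * exp (-θ * x) + c * (exp (-θ * x) * x ^ r) := by ring
  simp only [expand]
  exact ((exp_neg_integrableOn_Ioi 0 hθ).const_mul b).add
    ((integrableOn_Ioi_exp_neg_mul_rpow hr hθ).const_mul c)

lemma integral_Ioi_exp_neg_mul_add_rpow (hr : -1 < r) (hθ : 0 < θ) (b c : ℝ) :
    ∫ x in Ioi 0, exp (-θ * x) * (b + c * x ^ r) =
      b / θ + c * (Gamma (r + 1) / θ ^ (r + 1)) :=
  calc ∫ x in Ioi 0, exp (-θ * x) * (b + c * x ^ r)
      = ∫ x in Ioi 0, (b * exp (-θ * x) + c * (exp (-θ * x) * x ^ r)) := by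
        congr! 2 with x
        ring
    _ = b * (∫ x in Ioi 0, exp (-θ * x)) + c * ∫ x in Ioi 0, exp (-θ * x) * x ^ r := by
        rw [integral_add ((exp_neg_integrableOn_Ioi 0 hθ).const_mul b)
          ((integrableOn_Ioi_exp_neg_mul_rpow hr hθ).const_mul c), integral_const_mul,
          integral_const_mul]
    _ = b / θ + c * (Gamma (r + 1) / θ ^ (r + 1)) := by
        rw [integral_exp_mul_Ioi (neg_lt_zero.2 hθ), integral_Ioi_exp_neg_mul_rpow hr hθ,
          mul_zero, exp_zero, neg_div_neg_eq, mul_one_div]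

lemma setIntegral_exp_mul_le_of_le_add_rpow {F : ℝ → ℝ} {b c s : ℝ} (hr : -1 < r) (hθ : 0 < θ)
    (hF_nonneg : ∀ x, 0 < x → 0 ≤ F x) (hF_le : ∀ x, 0 < x → F x ≤ b + c * x ^ r) :
    ∫ x in Ioo 0 s, exp (-θ * x) * F x ≤ b / θ + c * (Gamma (r + 1) / θ ^ (r + 1)) := by
  have hint := integrableOn_Ioi_exp_neg_mul_add_rpow hr hθ b c
  have hbound_nonneg : ∀ x ∈ Ioi (0 : ℝ), 0 ≤ exp (-θ * x) * (b + c * x ^ r) := fun x hx =>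
    mul_nonneg (exp_pos _).le ((hF_nonneg x hx).trans (hF_le x hx))
  calc ∫ x in Ioo 0 s, exp (-θ * x) * F x
      ≤ ∫ x in Ioo 0 s, exp (-θ * x) * (b + c * x ^ r) :=
        integral_mono_of_nonneg
          (ae_restrict_of_forall_mem measurableSet_Ioo fun x hx =>
            mul_nonneg (exp_pos _).le (hF_nonneg x hx.1))
          (hint.mono_set Ioo_subset_Ioi_self)
          (ae_restrict_of_forall_mem measurableSet_Ioo fun x hx =>
            mul_le_mul_of_nonneg_left (hF_le x hx.1) (exp_pos _).le)
    _ ≤ ∫ x in Ioi 0, exp (-θ * x) * (b + c * x ^ r) :=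
        setIntegral_mono_set hint (ae_restrict_of_forall_mem measurableSet_Ioi hbound_nonneg)
          Ioo_subset_Ioi_self.eventuallyLE
    _ = b / θ + c * (Gamma (r + 1) / θ ^ (r + 1)) :=
        integral_Ioi_exp_neg_mul_add_rpow hr hθ b c

lemma setIntegral_exp_mul_setIntegral_exp_mul_add_rpow_neg_le (ha : 0 ≤ a) (ha_lt : a < 2)
    (hθ : 0 < θ) (s T : ℝ) :
    ∫ x in Ioo 0 s, exp (-θ * x) * ∫ y in Ioo 0 T, exp (-θ * (T - y)) * (x + y) ^ (-a) ≤
      (1 + 2 * a / θ) ^ a *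
        (2 / θ ^ 2 + Gamma (1 - a / 2) / ((1 - a / 2) * θ ^ (1 - a / 2))) * max 1 T ^ (-a) := by
  set K := (1 + 2 * a / θ) ^ a * max 1 T ^ (-a) with hK
  calc ∫ x in Ioo 0 s, exp (-θ * x) * ∫ y in Ioo 0 T, exp (-θ * (T - y)) * (x + y) ^ (-a)
      ≤ K * (2 / θ) / θ +
          K * (1 / (1 - a / 2)) * (Gamma (-(a / 2) + 1) / θ ^ (-(a / 2) + 1)) := by
        refine setIntegral_exp_mul_le_of_le_add_rpow (by linarith) hθ (fun x hx => ?_)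
          (fun x hx => ?_)
        · exact setIntegral_nonneg measurableSet_Ioo fun y hy =>
            mul_nonneg (exp_pos _).le (rpow_nonneg (add_pos hx hy.1).le _)
        · rw [mul_assoc K, ← mul_add]
          exact setIntegral_exp_mul_add_rpow_neg_le ha ha_lt hθ hx T
    _ = (1 + 2 * a / θ) ^ a *
          (2 / θ ^ 2 + Gamma (1 - a / 2) / ((1 - a / 2) * θ ^ (1 - a / 2))) *
            max 1 T ^ (-a) := by
        rw [← sub_eq_neg_add, hK]
        field_simp

end IntegralBounds

/-- The core estimate for `|ρ₂(t,s)| ≤ C min(1,(t-s)^{2H-2})`: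
`∫₀^s e^{θ(u-s)} ∫_s^t e^{θ(v-t)} (v-u)^{2H-2} dv du ≤ C ⬝ min(1, (t-s)^{2H-2})`. -/
theorem ou_covariance_kernel_bound (θ H : ℝ) (hθ : 0 < θ) (hH : H ∈ Set.Ioo (0 : ℝ) 1) :
    ∃ C : ℝ, 0 < C ∧ ∀ s t : ℝ, 0 ≤ s → s < t →
      (∫ u in Set.Ioo (0 : ℝ) s,
        Real.exp (θ * (u - s)) *
          ∫ v in Set.Ioo s t, Real.exp (θ * (v - t)) * (v - u) ^ (2 * H - 2)) ≤
      C * min 1 ((t - s) ^ (2 * H - 2)) := by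
  set a := 2 - 2 * H with ha_def
  have ha : 0 ≤ a := by linarith [hH.2]
  have ha_lt : a < 2 := by linarith [hH.1]
  have hexponent : 0 < 1 - a / 2 := by linarith
  refine ⟨(1 + 2 * a / θ) ^ a *
    (2 / θ ^ 2 + Gamma (1 - a / 2) / ((1 - a / 2) * θ ^ (1 - a / 2))), by positivity,
    fun s t _ hst => ?_⟩
  rw [← neg_sub 2 (2 * H), ← ha_def, ← max_one_rpow_neg ha (sub_pos.2 hst),
    setIntegral_exp_mul_setIntegral_exp_mul_comp_sub (fun w => w ^ (-a))]
  exact setIntegral_exp_mul_setIntegral_exp_mul_add_rpow_neg_le ha ha_lt hθ s (t - s)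
end

section
/- Let θ > 0 and H ∈ (0,1). There exists a positive constant C, depending only on θ and H, such that for all 0 < s < t, ( ∫₀^s e^(θ(u−s)) u^(H−1) du ) · ( ∫_s^t e^(θ(v−t)) v^(H−1) dv ) ≤ C · min(1, s^(2H−2), (t−s)^(H−1)). -/
open MeasureTheory Real Set

/-!
Write `J a x = ∫ₐˣ e^{θ(u-x)} u^r du` with `r = H - 1 ∈ (-1, 0]`. On `(0, x)` the exponential is
increasing and the power is decreasing, so by Chebyshev's integral inequality `J 0 x` is at most the
mean `x^r / (r + 1)` of the power times the integral of the exponential, which is at most `1 / θ`.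
For `x ≤ 1` one drops the exponential instead. Hence `J a x ≤ J 0 x ≤ K min(1, x^r)` for `0 ≤ a`,
and the product `J 0 s * J s t` is at most `K² min(1, s^r) min(1, t^r)`. Finally `t^r` is at most
both `s^r` and `(t - s)^r`.
-/

section Chebyshev

variable {α : Type*} [MeasurableSpace α] {μ : Measure α} {s : Set α} {f g : α → ℝ}

lemma setIntegral_const_add_mul_add_mul_add_mul_mul (hμs : μ s ≠ ⊤) (hf : IntegrableOn f s μ)
    (hg : IntegrableOn g s μ) (hfg : IntegrableOn (fun u => f u * g u) s μ) (a b c d : ℝ) :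
    ∫ u in s, (a + b * f u + c * g u + d * (f u * g u)) ∂μ =
      μ.real s * a + b * (∫ u in s, f u ∂μ) + c * (∫ u in s, g u ∂μ) +
        d * ∫ u in s, f u * g u ∂μ := by
  have ha : IntegrableOn (fun _ => a) s μ := integrableOn_const hμs
  have haf : IntegrableOn (fun u => a + b * f u) s μ := ha.add (hf.const_mul b)
  have hafg : IntegrableOn (fun u => a + b * f u + c * g u) s μ := haf.add (hg.const_mul c)
  rw [integral_add hafg (hfg.const_mul d), integral_add haf (hg.const_mul c),
    integral_add ha (hf.const_mul b), setIntegral_const, smul_eq_mul]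
  simp only [integral_const_mul]

/- Integrating `(f u - f v) * (g u - g v) ≤ 0` first over `u` and then over `v` gives twice the
inequality, without a product measure. -/
lemma measureReal_mul_setIntegral_mul_le_of_antivaryOn (h : AntivaryOn f g s)
    (hs : MeasurableSet s) (hμs : μ s ≠ ⊤) (hf : IntegrableOn f s μ) (hg : IntegrableOn g s μ)
    (hfg : IntegrableOn (fun u => f u * g u) s μ) :
    μ.real s * ∫ u in s, f u * g u ∂μ ≤ (∫ u in s, f u ∂μ) * ∫ u in s, g u ∂μ := by
  have expand := setIntegral_const_add_mul_add_mul_add_mul_mul hμs hf hg hfg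
  set F := ∫ u in s, f u ∂μ
  set G := ∫ u in s, g u ∂μ
  set P := ∫ u in s, f u * g u ∂μ
  have integral_u_nonpos (v : α) (hv : v ∈ s) :
      μ.real s * (f v * g v) + -g v * F + -f v * G + 1 * P ≤ 0 := by
    rw [← expand]
    exact setIntegral_nonpos hs fun u hu => by linarith [h.sub_mul_sub_nonpos hv hu]
  have integral_v_nonpos : μ.real s * P + -G * F + -F * G + μ.real s * P ≤ 0 := by
    rw [← expand]
    exact setIntegral_nonpos hs fun v hv => by linarith [integral_u_nonpos v hv]
  linarith

end Chebyshev

lemma setIntegral_Ioo_rpow_s9 {r x : ℝ} (hr : -1 < r) (hx : 0 ≤ x) :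
    ∫ u in Ioo 0 x, u ^ r = x ^ (r + 1) / (r + 1) := by
  rw [← integral_Ioc_eq_integral_Ioo, ← intervalIntegral.integral_of_le hx,
    integral_rpow (Or.inl hr), zero_rpow (by linarith), sub_zero]

section ExponentialWeight

variable {θ r a x : ℝ}

lemma integrableOn_Iic_exp_mul_sub (hθ : 0 < θ) (x : ℝ) :
    IntegrableOn (fun u => exp (θ * (u - x))) (Iic x) := by
  simp only [mul_sub, exp_sub]
  exact (integrableOn_exp_mul_Iic hθ x).div_const (exp (θ * x))

lemma integral_Iic_exp_mul_sub (hθ : 0 < θ) (x : ℝ) :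
    ∫ u in Iic x, exp (θ * (u - x)) = 1 / θ := by
  simp only [mul_sub, exp_sub, integral_div, integral_exp_mul_Iic hθ]
  field_simp

lemma setIntegral_Ioo_exp_mul_sub_le (hθ : 0 < θ) :
    ∫ u in Ioo a x, exp (θ * (u - x)) ≤ 1 / θ := by
  rw [← integral_Iic_exp_mul_sub hθ x]
  exact setIntegral_mono_set (integrableOn_Iic_exp_mul_sub hθ x)
    (ae_of_all _ fun _ => (exp_pos _).le)
    (Ioo_subset_Iio_self.trans Iio_subset_Iic_self).eventuallyLE

lemma integrableOn_Ioo_exp_mul_sub_mul_rpow (hr : -1 < r) (hx : 0 < x) :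
    IntegrableOn (fun u => exp (θ * (u - x)) * u ^ r) (Ioo 0 x) :=
  ((intervalIntegral.integrableOn_Ioo_rpow_iff hx).2 hr).continuousOn_mul_of_subset
    (by fun_prop) isCompact_Icc measurableSet_Ioo Ioo_subset_Icc_self

lemma setIntegral_Ioo_exp_mul_sub_mul_rpow_nonneg (ha : 0 ≤ a) :
    0 ≤ ∫ u in Ioo a x, exp (θ * (u - x)) * u ^ r :=
  setIntegral_nonneg measurableSet_Ioo fun _ hu =>
    mul_nonneg (exp_pos _).le (rpow_nonneg (ha.trans hu.1.le) r)

lemma setIntegral_Ioo_exp_mul_sub_mul_rpow_le_rpow_add_one (hθ : 0 ≤ θ) (hr : -1 < r)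
    (hx : 0 < x) :
    ∫ u in Ioo 0 x, exp (θ * (u - x)) * u ^ r ≤ x ^ (r + 1) / (r + 1) := by
  rw [← setIntegral_Ioo_rpow_s9 hr hx.le]
  refine setIntegral_mono_on (integrableOn_Ioo_exp_mul_sub_mul_rpow hr hx)
    ((intervalIntegral.integrableOn_Ioo_rpow_iff hx).2 hr) measurableSet_Ioo fun u hu => ?_
  refine mul_le_of_le_one_left (rpow_nonneg hu.1.le r) (exp_le_one_iff.2 ?_)
  exact mul_nonpos_of_nonneg_of_nonpos hθ (sub_nonpos.2 hu.2.le)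

lemma setIntegral_Ioo_exp_mul_sub_mul_rpow_le_rpow (hθ : 0 < θ) (hr : -1 < r) (hr₀ : r ≤ 0)
    (hx : 0 < x) :
    ∫ u in Ioo 0 x, exp (θ * (u - x)) * u ^ r ≤ 1 / θ * (x ^ r / (r + 1)) := by
  have hr₁ : 0 < r + 1 := by linarith
  have hexp : MonotoneOn (fun u => exp (θ * (u - x))) (Ioo 0 x) :=
    fun u _ v _ huv => exp_le_exp.2 (by gcongr)
  have hpow : AntitoneOn (fun u : ℝ => u ^ r) (Ioo 0 x) :=
    (antitoneOn_rpow_Ioi_of_exponent_nonpos hr₀).mono Ioo_subset_Ioi_self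
  have chebyshev := measureReal_mul_setIntegral_mul_le_of_antivaryOn (hexp.antivaryOn hpow)
    measurableSet_Ioo measure_Ioo_lt_top.ne
    ((integrableOn_Iic_exp_mul_sub hθ x).mono_set
      (Ioo_subset_Iio_self.trans Iio_subset_Iic_self))
    ((intervalIntegral.integrableOn_Ioo_rpow_iff hx).2 hr)
    (integrableOn_Ioo_exp_mul_sub_mul_rpow hr hx)
  rw [volume_real_Ioo_of_le hx.le, sub_zero, setIntegral_Ioo_rpow_s9 hr hx.le] at chebyshev
  refine le_of_mul_le_mul_left ?_ hx
  calc x * ∫ u in Ioo 0 x, exp (θ * (u - x)) * u ^ r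
      ≤ (∫ u in Ioo 0 x, exp (θ * (u - x))) * (x ^ (r + 1) / (r + 1)) := chebyshev
    _ ≤ 1 / θ * (x ^ (r + 1) / (r + 1)) := by
        gcongr
        exact setIntegral_Ioo_exp_mul_sub_le hθ
    _ = x * (1 / θ * (x ^ r / (r + 1))) := by
        rw [rpow_add_one hx.ne']
        ring

lemma setIntegral_Ioo_exp_mul_sub_mul_rpow_le_min (hθ : 0 < θ) (hr : -1 < r) (hr₀ : r ≤ 0)
    (ha : 0 ≤ a) (hx : 0 < x) :
    ∫ u in Ioo a x, exp (θ * (u - x)) * u ^ r ≤ (1 + 1 / θ) / (r + 1) * min 1 (x ^ r) := by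
  have hr₁ : 0 < r + 1 := by linarith
  have extend : ∫ u in Ioo a x, exp (θ * (u - x)) * u ^ r ≤
      ∫ u in Ioo 0 x, exp (θ * (u - x)) * u ^ r := by
    refine setIntegral_mono_set (integrableOn_Ioo_exp_mul_sub_mul_rpow hr hx) ?_
      (Ioo_subset_Ioo_left ha).eventuallyLE
    exact ae_restrict_of_forall_mem measurableSet_Ioo fun u hu =>
      mul_nonneg (exp_pos _).le (rpow_nonneg hu.1.le r)
  refine extend.trans ?_
  rcases le_total x 1 with hx₁ | hx₁
  · rw [min_eq_left (one_le_rpow_of_pos_of_le_one_of_nonpos hx hx₁ hr₀), mul_one]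
    calc ∫ u in Ioo 0 x, exp (θ * (u - x)) * u ^ r
        ≤ x ^ (r + 1) / (r + 1) :=
          setIntegral_Ioo_exp_mul_sub_mul_rpow_le_rpow_add_one hθ.le hr hx
      _ ≤ (1 + 1 / θ) / (r + 1) := by
          gcongr
          exact (rpow_le_one hx.le hx₁ hr₁.le).trans (le_add_of_nonneg_right (by positivity))
  · rw [min_eq_right (rpow_le_one_of_one_le_of_nonpos hx₁ hr₀)]
    calc ∫ u in Ioo 0 x, exp (θ * (u - x)) * u ^ r
        ≤ 1 / θ * (x ^ r / (r + 1)) :=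
          setIntegral_Ioo_exp_mul_sub_mul_rpow_le_rpow hθ hr hr₀ hx
      _ ≤ (1 + 1 / θ) * (x ^ r / (r + 1)) := by
          gcongr
          exact le_add_of_nonneg_left zero_le_one
      _ = (1 + 1 / θ) / (r + 1) * x ^ r := by ring

end ExponentialWeight

lemma min_one_rpow_mul_min_one_rpow_le {r s t : ℝ} (hr : r ≤ 0) (hs : 0 < s) (hst : s < t) :
    min 1 (s ^ r) * min 1 (t ^ r) ≤ min 1 (min (s ^ (2 * r)) ((t - s) ^ r)) := by
  have hs_nonneg : 0 ≤ s ^ r := rpow_nonneg hs.le r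
  have ht_nonneg : 0 ≤ min 1 (t ^ r) := le_min zero_le_one (rpow_nonneg (hs.trans hst).le r)
  refine le_min ?_ (le_min ?_ ?_)
  · exact mul_le_one₀ (min_le_left _ _) ht_nonneg (min_le_left _ _)
  · calc min 1 (s ^ r) * min 1 (t ^ r) ≤ s ^ r * s ^ r :=
          mul_le_mul (min_le_right _ _)
            ((min_le_right _ _).trans (rpow_le_rpow_of_nonpos hs hst.le hr)) ht_nonneg hs_nonneg
      _ = s ^ (2 * r) := by rw [← rpow_add hs, two_mul]
  · calc min 1 (s ^ r) * min 1 (t ^ r) ≤ t ^ r :=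
          (mul_le_of_le_one_left ht_nonneg (min_le_left _ _)).trans (min_le_right _ _)
      _ ≤ (t - s) ^ r :=
          rpow_le_rpow_of_nonpos (sub_pos.2 hst) (sub_le_self t hs.le) hr

/-- The core estimate for `|ρ₁(t,s) - ρ₂(t,s)| ≤ C min(1, s^{2H-2}, (t-s)^{H-1})`:
`(∫₀^s e^{θ(u-s)} u^{H-1} du) ⬝ (∫_s^t e^{θ(v-t)} v^{H-1} dv)
  ≤ C ⬝ min(1, s^{2H-2}, (t-s)^{H-1})`. -/
theorem ou_covariance_difference_kernel_bound (θ H : ℝ) (hθ : 0 < θ)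
    (hH : H ∈ Set.Ioo (0 : ℝ) 1) :
    ∃ C : ℝ, 0 < C ∧ ∀ s t : ℝ, 0 < s → s < t →
      (∫ u in Set.Ioo (0 : ℝ) s, Real.exp (θ * (u - s)) * u ^ (H - 1)) *
        (∫ v in Set.Ioo s t, Real.exp (θ * (v - t)) * v ^ (H - 1)) ≤
      C * min 1 (min (s ^ (2 * H - 2)) ((t - s) ^ (H - 1))) := by
  have hr : -1 < H - 1 := by linarith [hH.1]
  have hr₀ : H - 1 ≤ 0 := by linarith [hH.2]
  have hr₁ : 0 < H - 1 + 1 := by linarith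
  set K := (1 + 1 / θ) / (H - 1 + 1)
  have hK : 0 < K := by positivity
  refine ⟨K ^ 2, pow_pos hK 2, fun s t hs hst => ?_⟩
  calc _ ≤ (K * min 1 (s ^ (H - 1))) * (K * min 1 (t ^ (H - 1))) :=
        mul_le_mul (setIntegral_Ioo_exp_mul_sub_mul_rpow_le_min hθ hr hr₀ le_rfl hs)
          (setIntegral_Ioo_exp_mul_sub_mul_rpow_le_min hθ hr hr₀ hs.le (hs.trans hst))
          (setIntegral_Ioo_exp_mul_sub_mul_rpow_nonneg hs.le) (by positivity)
    _ = K ^ 2 * (min 1 (s ^ (H - 1)) * min 1 (t ^ (H - 1))) := by ring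
    _ ≤ K ^ 2 * min 1 (min (s ^ (2 * (H - 1))) ((t - s) ^ (H - 1))) := by
        gcongr
        exact min_one_rpow_mul_min_one_rpow_le hr₀ hs hst
    _ = K ^ 2 * min 1 (min (s ^ (2 * H - 2)) ((t - s) ^ (H - 1))) := by
        rw [mul_sub, mul_one]
end
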